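/- Let T > 0, let g satisfy (g1), be regularly oscillating at zero, and satisfy lim_{s→0⁺} g(s)/s = 0. Let a ∈ L¹([0,T]) satisfy (a1) and (a2), and set g_∞ := liminf_{s→+∞} g(s)/s. Assume that for each i = 1,…,m there exist λᵢ with 0 < λᵢ < g_∞ and a C¹ function φᵢ : Iᵢ → ℝ with absolutely continuous derivative, φᵢ > 0 on the interior of Iᵢ, φᵢ = 0 at both endpoints of Iᵢ, and φᵢ'' + λᵢ a(x) φᵢ = 0 a.e. on Iᵢ (i.e., g_∞ > max_i λ₁ⁱ, where λ₁ⁱ is the first eigenvalue of φ'' + λ a(x) φ = 0 with φ = 0 on ∂Iᵢ). Then the equation u'' + a(x) g(u) = 0 has at least one positive solution satisfying the Neumann boundary conditions and at least one positive solution satisfying the periodic boundary conditions. -/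

import Mathlib

open MeasureTheory Set Filter

/-- `u` (with derivative `u'`) is a C¹ solution of `u'' + f(x) = 0` on `[0,T]`:
`u'` is absolutely continuous and the equation holds a.e., expressed via the
integral equation `u'(x) = u'(0) − ∫₀ˣ f(t) dt`. -/
def IsSolOn (T : ℝ) (f : ℝ → ℝ) (u u' : ℝ → ℝ) : Prop :=
  (∀ x ∈ Icc (0:ℝ) T, HasDerivWithinAt u (u' x) (Icc (0:ℝ) T) x) ∧
  ContinuousOn u' (Icc (0:ℝ) T) ∧
  ∀ x ∈ Icc (0:ℝ) T, u' x = u' 0 - ∫ t in (0:ℝ)..x, f t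

/-- The equation `u'' + a(x) g(u) = 0` on `[0,T]` has a positive solution
satisfying the Neumann boundary conditions. -/
def PosSolNeumann (T : ℝ) (a g : ℝ → ℝ) : Prop :=
  ∃ u u' : ℝ → ℝ, IsSolOn T (fun t => a t * g (u t)) u u' ∧
    (∀ x ∈ Icc (0:ℝ) T, 0 < u x) ∧ u' 0 = 0 ∧ u' T = 0

/-- The equation `u'' + a(x) g(u) = 0` on `[0,T]` has a positive solution
satisfying the periodic boundary conditions. -/
def PosSolPeriodic (T : ℝ) (a g : ℝ → ℝ) : Prop :=
  ∃ u u' : ℝ → ℝ, IsSolOn T (fun t => a t * g (u t)) u u' ∧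
    (∀ x ∈ Icc (0:ℝ) T, 0 < u x) ∧ u 0 = u T ∧ u' 0 = u' T

/-- Condition (g1): `g : [0,∞) → [0,∞)` is continuous, `g 0 = 0`, `g > 0` on `(0,∞)`. -/
def CondG1 (g : ℝ → ℝ) : Prop :=
  ContinuousOn g (Ici (0:ℝ)) ∧ (∀ s : ℝ, 0 ≤ s → 0 ≤ g s) ∧ g 0 = 0 ∧
    ∀ s : ℝ, 0 < s → 0 < g s

/-- `g` is regularly oscillating at zero. -/
def RegOscAtZero (g : ℝ → ℝ) : Prop :=
  ∀ ε : ℝ, 0 < ε → ∃ δ > (0:ℝ), ∃ η > (0:ℝ), ∀ s ω : ℝ,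
    0 < s → s < δ → |ω - 1| < η → |g (ω * s) / g s - 1| < ε

/-- `liminf_{s → +∞} g(s)/s`, computed in `EReal`. -/
noncomputable def GrowthLiminf (g : ℝ → ℝ) : EReal :=
  liminf (fun s : ℝ => ((g s / s : ℝ) : EReal)) atTop

/-- `limsup_{s → +∞} g(s)/s`, computed in `EReal`. -/
noncomputable def GrowthLimsup (g : ℝ → ℝ) : EReal :=
  limsup (fun s : ℝ => ((g s / s : ℝ) : EReal)) atTop

/-- `(lam, φ)` is a Dirichlet eigenpair of `φ'' + λ a(x) φ = 0` on `[x₁,x₂]` with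
`φ > 0` in the interior (so `lam` is the first eigenvalue): `φ` is `C¹` with
absolutely continuous derivative, expressed via the integral equation. -/
def DirichletEigenpair (a : ℝ → ℝ) (x₁ x₂ lam : ℝ) : Prop :=
  ∃ φ φ' : ℝ → ℝ,
    (∀ x ∈ Icc x₁ x₂, HasDerivWithinAt φ (φ' x) (Icc x₁ x₂) x) ∧
    ContinuousOn φ' (Icc x₁ x₂) ∧
    (∀ x ∈ Ioo x₁ x₂, 0 < φ x) ∧ φ x₁ = 0 ∧ φ x₂ = 0 ∧
    ∀ x ∈ Icc x₁ x₂, φ' x = φ' x₁ - lam * ∫ t in x₁..x, a t * φ t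



/-- second derivative equals minus f -/
def LS (f : ℝ → ℝ) (l r : ℝ) (u u' : ℝ → ℝ) : Prop :=
  (∀ x ∈ Icc l r, HasDerivWithinAt u (u' x) (Icc l r) x) ∧
  ContinuousOn u' (Icc l r) ∧
  ∀ x ∈ Icc l r, ∀ y ∈ Icc l r, u' y = u' x - ∫ t in x..y, f t

lemma ii_sub {f : ℝ → ℝ} {l r x y : ℝ} (h : IntervalIntegrable f volume l r) (hx : x ∈ Icc l r)
    (hy : y ∈ Icc l r) : IntervalIntegrable f volume x y := by
  have hlr : l ≤ r := hx.1.trans hx.2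
  apply h.mono_set
  rw [uIcc_of_le hlr]
  exact uIcc_subset_Icc hx hy

lemma LS.cont {f : ℝ → ℝ} {l r : ℝ} {u u' : ℝ → ℝ} (h : LS f l r u u') :
    ContinuousOn u (Icc l r) := fun x hx => (h.1 x hx).continuousWithinAt

lemma LS.mono {f : ℝ → ℝ} {l r l' r' : ℝ} {u u' : ℝ → ℝ} (h : LS f l r u u')
    (hl : l ≤ l') (hr : r' ≤ r) : LS f l' r' u u' := by
  have hs : Icc l' r' ⊆ Icc l r := Icc_subset_Icc hl hr
  exact ⟨fun x hx => (h.1 x (hs hx)).mono hs, h.2.1.mono hs,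
    fun x hx y hy => h.2.2 x (hs hx) y (hs hy)⟩

lemma LS.of_isSolOn {f : ℝ → ℝ} {T : ℝ} {u u' : ℝ → ℝ} (h : IsSolOn T f u u')
    (hf : IntervalIntegrable f volume 0 T) : LS f 0 T u u' := by
  refine ⟨h.1, h.2.1, fun x hx y hy => ?_⟩
  have h0 : (0:ℝ) ∈ Icc (0:ℝ) T := ⟨le_rfl, hx.1.trans hx.2⟩
  rw [h.2.2 x hx, h.2.2 y hy,
    ← intervalIntegral.integral_add_adjacent_intervals (ii_sub hf h0 hx) (ii_sub hf hx hy)]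
  ring

lemma LS.isSolOn {f : ℝ → ℝ} {T : ℝ} {u u' : ℝ → ℝ} (h : LS f 0 T u u') : IsSolOn T f u u' :=
  ⟨h.1, h.2.1, fun x hx => h.2.2 0 ⟨le_rfl, hx.1.trans hx.2⟩ x hx⟩

/-- FTC for C¹ functions -/
lemma ftc {l r : ℝ} {u u' : ℝ → ℝ} (h1 : ∀ x ∈ Icc l r, HasDerivWithinAt u (u' x) (Icc l r) x)
    (h2 : ContinuousOn u' (Icc l r)) {x y : ℝ} (hx : x ∈ Icc l r) (hy : y ∈ Icc l r) :
    u y = u x + ∫ t in x..y, u' t := by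
  have hsub : uIcc x y ⊆ Icc l r := uIcc_subset_Icc hx hy
  have : ∫ t in x..y, u' t = u y - u x := by
    apply intervalIntegral.integral_eq_sub_of_hasDeriv_right
    · exact fun z hz => ((h1 z (hsub hz)).continuousWithinAt).mono hsub
    · intro z hz
      have hz' : z ∈ Ioo l r := by
        rcases le_total x y with h | h
        · simp only [min_eq_left h, max_eq_right h] at hz
          exact ⟨hx.1.trans_lt hz.1, hz.2.trans_le hy.2⟩
        · simp only [min_eq_right h, max_eq_left h] at hz
          exact ⟨hy.1.trans_lt hz.1, hz.2.trans_le hx.2⟩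
      exact ((h1 z (Ioo_subset_Icc_self hz')).hasDerivAt (Icc_mem_nhds hz'.1 hz'.2)).hasDerivWithinAt
    · exact (h2.mono hsub).intervalIntegrable
  linarith

/-- integration by parts for primitives of integrable functions -/
lemma ibp {l r : ℝ} (hlr : l ≤ r) {F f H h : ℝ → ℝ} (hf : IntervalIntegrable f volume l r)
    (hh : IntervalIntegrable h volume l r)
    (hF : ∀ x ∈ Icc l r, F x = F l + ∫ t in l..x, f t)
    (hH : ∀ x ∈ Icc l r, H x = H l + ∫ t in l..x, h t) :
    ∫ x in l..r, (f x * H x + F x * h x) = F r * H r - F l * H l := by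
  set P : ℝ → ℝ := fun x => F l + ∫ t in l..x, f t with hP
  set Q : ℝ → ℝ := fun x => H l + ∫ t in l..x, h t with hQ
  have hc : ∀ c : ℝ, AbsolutelyContinuousOnInterval (fun _ : ℝ => c) l r := fun c =>
    (LipschitzOnWith.absolutelyContinuousOnInterval (K := 0)
      ((LipschitzWith.const c).lipschitzOnWith))
  have hPac : AbsolutelyContinuousOnInterval P l r :=
    (hc _).add (hf.absolutelyContinuousOnInterval_intervalIntegral (c := l) (by simp))
  have hQac : AbsolutelyContinuousOnInterval Q l r :=
    (hc _).add (hh.absolutelyContinuousOnInterval_intervalIntegral (c := l) (by simp))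
  have key := hPac.integral_deriv_mul_eq_sub hQac
  have e1 : P r = F r := (hF r ⟨hlr, le_rfl⟩).symm
  have e2 : P l = F l := by simp [hP]
  have e3 : Q r = H r := (hH r ⟨hlr, le_rfl⟩).symm
  have e4 : Q l = H l := by simp [hQ]
  rw [e1, e2, e3, e4] at key
  rw [← key]
  apply intervalIntegral.integral_congr_ae
  filter_upwards [hf.ae_hasDerivAt_integral, hh.ae_hasDerivAt_integral] with x hx1 hx2 hx
  have hx' : x ∈ uIcc l r := uIoc_subset_uIcc hx
  have d1 : deriv P x = f x := ((hx1 hx' l (by simp)).const_add _).deriv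
  have d2 : deriv Q x = h x := ((hx2 hx' l (by simp)).const_add _).deriv
  rw [uIcc_of_le hlr] at hx'
  rw [d1, d2, hF x hx', hH x hx']

lemma gron_abs (l r : ℝ) (β : ℝ → ℝ) (hβ : IntervalIntegrable β volume l r) (hβ0 : ∀ x, 0 ≤ β x) :
    ∃ E : ℝ, 1 ≤ E ∧ ∀ N : ℝ → ℝ, ContinuousOn N (Icc l r) → (∀ x ∈ Icc l r, 0 ≤ N x) →
      (∀ x ∈ Icc l r, ∀ y ∈ Icc l r, N y ≤ N x + |∫ t in x..y, β t * N t|) →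
      ∀ x ∈ Icc l r, ∀ y ∈ Icc l r, N y ≤ E * N x := by
  rcases lt_or_ge r l with hlr | hlr
  · exact ⟨1, le_rfl, fun N _ _ _ x hx => absurd (hx.1.trans hx.2) (not_le.2 hlr)⟩
  -- uniform continuity
  have hcont : ContinuousOn (fun x => ∫ t in l..x, β t) (Icc l r) := by
    have := intervalIntegral.continuousOn_primitive_interval' hβ (left_mem_uIcc)
    rwa [uIcc_of_le hlr] at this
  have huc := isCompact_Icc.uniformContinuousOn_of_continuous hcont
  rw [Metric.uniformContinuousOn_iff] at huc
  obtain ⟨δ, hδ, hd⟩ := huc (1/2) (by norm_num)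
  have hsmall : ∀ x ∈ Icc l r, ∀ y ∈ Icc l r, |x - y| < δ → |∫ t in x..y, β t| ≤ 1/2 := by
    intro x hx y hy hxy
    have := hd y hy x hx (by rw [Real.dist_eq, abs_sub_comm]; exact hxy)
    rw [Real.dist_eq] at this
    have e : ∫ t in x..y, β t = (∫ t in l..y, β t) - ∫ t in l..x, β t := by
      rw [intervalIntegral.integral_interval_sub_left (ii_sub hβ ⟨le_rfl, hlr⟩ hy) (ii_sub hβ ⟨le_rfl, hlr⟩ hx)]
    rw [e]; exact this.le
  obtain ⟨n, hn⟩ := exists_nat_gt ((r - l) / (δ/2))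
  refine ⟨2^n, one_le_pow₀ (by norm_num), fun N hN hN0 hineq => ?_⟩
  have step : ∀ x ∈ Icc l r, ∀ y ∈ Icc l r, |x - y| < δ → N y ≤ 2 * N x := by
    intro x hx y hy hxy
    have hsub : uIcc x y ⊆ Icc l r := uIcc_subset_Icc hx hy
    obtain ⟨z, hz, hmax⟩ := isCompact_uIcc.exists_isMaxOn (nonempty_uIcc (a := x) (b := y)) (hN.mono hsub)
    have hz' := hsub hz
    have hzx : |x - z| < δ := by
      refine lt_of_le_of_lt ?_ hxy
      rw [abs_sub_comm x z, abs_sub_comm x y]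
      exact abs_sub_left_of_mem_uIcc hz
    have h1 := hineq x hx z hz'
    have h2 : |∫ t in x..z, β t * N t| ≤ N z * |∫ t in x..z, β t| := by
      have hb : ∀ t ∈ uIoc x z, ‖β t * N t‖ ≤ N z * β t := by
        intro t ht
        have ht' : t ∈ uIcc x y := by
          have := uIoc_subset_uIcc ht
          exact uIcc_subset_uIcc_left hz this
        rw [Real.norm_eq_abs, abs_of_nonneg (mul_nonneg (hβ0 t) (hN0 t (hsub ht'))), mul_comm]
        exact mul_le_mul_of_nonneg_right (hmax ht') (hβ0 t)
      have hi : IntervalIntegrable (fun t => N z * β t) volume x z := (ii_sub hβ hx hz').const_mul _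
      have := intervalIntegral.norm_integral_le_abs_of_norm_le (μ := volume) (a := x) (b := z)
        (f := fun t => β t * N t) (g := fun t => N z * β t)
        ((ae_restrict_iff' measurableSet_uIoc).2 (ae_of_all _ hb)) hi
      rw [intervalIntegral.integral_const_mul, abs_mul, abs_of_nonneg (hN0 z hz')] at this
      exact this
    have h3 := hsmall x hx z hz' hzx
    have h4 := mul_le_mul_of_nonneg_left h3 (hN0 z hz')
    have h5 : N y ≤ N z := hmax right_mem_uIcc
    linarith
  have main : ∀ k : ℕ, ∀ x ∈ Icc l r, ∀ y ∈ Icc l r, |y - x| ≤ k * (δ/2) → N y ≤ 2^k * N x := by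
    intro k
    induction k with
    | zero =>
      intro x hx y hy h
      have : y = x := by
        have : |y - x| = 0 := le_antisymm (by simpa using h) (abs_nonneg _)
        linarith [abs_eq_zero.1 this]
      simp [this]
    | succ k ih =>
      intro x hx y hy h
      push_cast at h
      -- intermediate point
      have hk : (0:ℝ) < k + 1 := by positivity
      set z := x + (k / (k+1)) * (y - x) with hz
      have hq0 : 0 ≤ (k:ℝ)/(k+1) := by positivity
      have hq1 : (k:ℝ)/(k+1) ≤ 1 := by rw [div_le_one hk]; linarith
      have hz' : z ∈ Icc l r := by
        have : z = (1 - k/(k+1)) * x + (k/(k+1)) * y := by rw [hz]; ring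
        rw [this]
        exact (convex_Icc l r) hx hy (by linarith) hq0 (by ring)
      have e1 : |z - x| ≤ k * (δ/2) := by
        have : z - x = (k/(k+1)) * (y-x) := by rw [hz]; ring
        rw [this, abs_mul, abs_of_nonneg hq0, div_mul_eq_mul_div, div_le_iff₀ hk]
        nlinarith [abs_nonneg (y-x), (Nat.cast_nonneg k : (0:ℝ) ≤ k)]
      have e2 : |z - y| < δ := by
        have : z - y = -((1/(k+1)) * (y-x)) := by rw [hz]; field_simp; ring
        rw [this, abs_neg, abs_mul, abs_of_nonneg (by positivity : (0:ℝ) ≤ 1/(k+1)), one_div_mul_eq_div, div_lt_iff₀ hk]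
        nlinarith [abs_nonneg (y-x), (Nat.cast_nonneg k : (0:ℝ) ≤ k)]
      have := ih x hx z hz' e1
      have := step z hz' y hy e2
      rw [pow_succ]; linarith
  intro x hx y hy
  apply main n x hx y hy
  rw [div_lt_iff₀ (by positivity)] at hn
  rw [abs_le]; constructor <;> linarith [hx.1, hx.2, hy.1, hy.2]

lemma gron (l r K : ℝ) (hK : 0 ≤ K) (a : ℝ → ℝ) (ha : IntervalIntegrable a volume l r) :
    ∃ E : ℝ, 1 ≤ E ∧ ∀ u u' h : ℝ → ℝ, LS (fun t => a t * h t) l r u u' →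
      (∀ x ∈ Icc l r, |h x| ≤ K * |u x|) →
      ∀ x ∈ Icc l r, ∀ y ∈ Icc l r, |u y| + |u' y| ≤ E * (|u x| + |u' x|) := by
  have hβ : IntervalIntegrable (fun t => 1 + K * |a t|) volume l r :=
    intervalIntegrable_const.add (ha.abs.const_mul K)
  obtain ⟨E, hE, H⟩ := gron_abs l r (fun t => 1 + K * |a t|) hβ (fun x => by positivity)
  refine ⟨E, hE, fun u u' h hs hh => H (fun x => |u x| + |u' x|) (hs.cont.abs.add hs.2.1.abs)
    (fun x _ => by positivity) ?_⟩
  intro x hx y hy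
  have hsub : uIcc x y ⊆ Icc l r := uIcc_subset_Icc hx hy
  have hNc : ContinuousOn (fun t => |u t| + |u' t|) (uIcc x y) := (hs.cont.abs.add hs.2.1.abs).mono hsub
  have e1 := ftc hs.1 hs.2.1 hx hy
  have e2 := hs.2.2 x hx y hy
  have b1 : |∫ t in x..y, u' t| ≤ |∫ t in x..y, abs (u' t)|  := by
    have := intervalIntegral.norm_integral_le_abs_integral_norm (f := u') (a := x) (b := y) (μ := volume)
    simp only [Real.norm_eq_abs] at this
    exact this
  have hi1 : IntervalIntegrable (fun t => |u' t|) volume x y := ((hs.2.1.mono hsub).abs).intervalIntegrable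
  have hi2 : IntervalIntegrable (fun t => K * |a t| * (|u t| + |u' t|)) volume x y :=
    (((ii_sub ha hx hy).abs.const_mul K)).mul_continuousOn hNc
  have b2 : |∫ t in x..y, a t * h t| ≤ |∫ t in x..y, K * |a t| * (|u t| + |u' t|)| := by
    have hb : ∀ t ∈ uIoc x y, ‖a t * h t‖ ≤ K * |a t| * (|u t| + |u' t|) := by
      intro t ht
      have := hh t (hsub (uIoc_subset_uIcc ht))
      rw [Real.norm_eq_abs, abs_mul]
      have h3 : |h t| ≤ K * (|u t| + |u' t|) := this.trans (mul_le_mul_of_nonneg_left (by linarith [abs_nonneg (u' t)]) hK)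
      calc |a t| * |h t| ≤ |a t| * (K * (|u t| + |u' t|)) := mul_le_mul_of_nonneg_left h3 (abs_nonneg _)
        _ = _ := by ring
    exact intervalIntegral.norm_integral_le_abs_of_norm_le (μ := volume)
        ((ae_restrict_iff' measurableSet_uIoc).2 (ae_of_all _ hb)) hi2
  have b3 : |∫ t in x..y, abs (u' t)| + |∫ t in x..y, K * |a t| * (|u t| + |u' t|)| ≤
      |∫ t in x..y, (1 + K * |a t|) * (|u t| + |u' t|)| := by
    have hi3 : IntervalIntegrable (fun t => |u t| + |u' t|) volume x y := hNc.intervalIntegrable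
    have e : ∫ t in x..y, (1 + K * |a t|) * (|u t| + |u' t|) =
      (∫ t in x..y, (|u t| + |u' t|)) + ∫ t in x..y, K * |a t| * (|u t| + |u' t|) := by
      rw [← intervalIntegral.integral_add hi3 hi2]
      congr 1; ext t; ring
    rw [e]
    have p2 : ∀ t, 0 ≤ K * |a t| * (|u t| + |u' t|) := fun t => by positivity
    have hle : ∀ t, |u' t| ≤ |u t| + |u' t| := fun t => by linarith [abs_nonneg (u t)]
    rcases le_total x y with hxy | hxy
    · have q1 := intervalIntegral.integral_nonneg (μ := volume) hxy (fun t _ => abs_nonneg (u' t))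
      have q2 := intervalIntegral.integral_nonneg (μ := volume) hxy (fun t _ => p2 t)
      have q3 := intervalIntegral.integral_mono_on hxy hi1 hi3 (fun t _ => hle t)
      rw [abs_of_nonneg q1, abs_of_nonneg q2, abs_of_nonneg (by linarith)]
      linarith
    · rw [intervalIntegral.integral_symm y x, abs_neg, intervalIntegral.integral_symm y x, abs_neg,
        intervalIntegral.integral_symm y x, ← neg_add, abs_neg]
      have q1 := intervalIntegral.integral_nonneg (μ := volume) hxy (fun t _ => abs_nonneg (u' t))
      have q2 := intervalIntegral.integral_nonneg (μ := volume) hxy (fun t _ => p2 t)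
      have q3 := intervalIntegral.integral_mono_on hxy hi1.symm hi3.symm (fun t _ => hle t)
      rw [abs_of_nonneg q1, abs_of_nonneg q2, abs_of_nonneg (by linarith)]
      linarith
  have c1 : |u y| ≤ |u x| + |∫ t in x..y, u' t| := by rw [e1]; exact abs_add_le _ _
  have c2 : |u' y| ≤ |u' x| + |∫ t in x..y, a t * h t| := by rw [e2]; exact abs_sub _ _
  show |u y| + |u' y| ≤ |u x| + |u' x| + _
  linarith


lemma LS.antitone {f : ℝ → ℝ} {l r : ℝ} {u u' : ℝ → ℝ} (h : LS f l r u u')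
    (hf : ∀ᵐ x ∂(volume.restrict (Icc l r)), 0 ≤ f x) : AntitoneOn u' (Icc l r) := by
  intro x hx y hy hxy
  rw [h.2.2 x hx y hy]
  have : 0 ≤ ∫ t in x..y, f t := by
    apply intervalIntegral.integral_nonneg_of_ae_restrict hxy
    exact ae_restrict_of_ae_restrict_of_subset (Icc_subset_Icc hx.1 hy.2) hf
  linarith

lemma LS.monotone {f : ℝ → ℝ} {l r : ℝ} {u u' : ℝ → ℝ} (h : LS f l r u u')
    (hf : ∀ᵐ x ∂(volume.restrict (Icc l r)), f x ≤ 0) : MonotoneOn u' (Icc l r) := by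
  intro x hx y hy hxy
  rw [h.2.2 x hx y hy]
  have : 0 ≤ ∫ t in x..y, - f t := by
    apply intervalIntegral.integral_nonneg_of_ae_restrict hxy
    have := ae_restrict_of_ae_restrict_of_subset (Icc_subset_Icc hx.1 hy.2) hf
    filter_upwards [this] with t ht
    simpa using ht
  rw [intervalIntegral.integral_neg] at this
  linarith

lemma LS.concave {f : ℝ → ℝ} {l r : ℝ} {u u' : ℝ → ℝ} (h : LS f l r u u')
    (hf : ∀ᵐ x ∂(volume.restrict (Icc l r)), 0 ≤ f x) : ConcaveOn ℝ (Icc l r) u := by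
  have hd : ∀ x ∈ Ioo l r, HasDerivAt u (u' x) x := fun x hx =>
    (h.1 x (Ioo_subset_Icc_self hx)).hasDerivAt (Icc_mem_nhds hx.1 hx.2)
  apply AntitoneOn.concaveOn_of_deriv (convex_Icc l r) h.cont
  · rw [interior_Icc]
    exact fun x hx => (hd x hx).differentiableAt.differentiableWithinAt
  · rw [interior_Icc]
    intro x hx y hy hxy
    rw [(hd x hx).deriv, (hd y hy).deriv]
    exact h.antitone hf (Ioo_subset_Icc_self hx) (Ioo_subset_Icc_self hy) hxy

lemma concave_low {l r : ℝ} (hlr : l < r) {u : ℝ → ℝ} (h : ConcaveOn ℝ (Icc l r) u)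
    (h0 : ∀ x ∈ Icc l r, 0 ≤ u x) {x z : ℝ} (hx : x ∈ Icc l r) (hz : z ∈ Icc l r) :
    u z * ((x - l) * (r - x) / (r - l)^2) ≤ u x := by
  have hL : 0 < r - l := by linarith
  have hl : l ∈ Icc l r := ⟨le_rfl, hlr.le⟩
  have hr : r ∈ Icc l r := ⟨hlr.le, le_rfl⟩
  have p1 : (x - l) / (r - l) ≤ 1 := by rw [div_le_one hL]; linarith [hx.2]
  have p2 : (r - x) / (r - l) ≤ 1 := by rw [div_le_one hL]; linarith [hx.1]
  have p3 : 0 ≤ (x - l) / (r - l) := div_nonneg (by linarith [hx.1]) hL.le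
  have p4 : 0 ≤ (r - x) / (r - l) := div_nonneg (by linarith [hx.2]) hL.le
  have e : (x - l) * (r - x) / (r - l)^2 = ((x - l) / (r - l)) * ((r - x) / (r - l)) := by
    rw [div_mul_div_comm, sq]
  rw [e]
  have hz0 := h0 z hz
  rcases lt_trichotomy x z with hxz | hxz | hxz
  · have hzl : 0 < z - l := by linarith [hx.1]
    set θ := (x - l) / (z - l) with hθ
    have t0 : 0 ≤ θ := div_nonneg (by linarith [hx.1]) hzl.le
    have t1 : θ ≤ 1 := by rw [hθ, div_le_one hzl]; linarith
    have hc := h.2 hl hz (by linarith : 0 ≤ 1 - θ) t0 (by ring)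
    simp only [smul_eq_mul] at hc
    have ex : (1 - θ) * l + θ * z = x := by rw [hθ]; field_simp; ring
    rw [ex] at hc
    have t2 : (x - l) / (r - l) ≤ θ := by
      rw [hθ]; exact div_le_div_of_nonneg_left (by linarith [hx.1]) hzl (by linarith [hz.2])
    have t3 : ((x - l) / (r - l)) * ((r - x) / (r - l)) ≤ θ := by nlinarith
    nlinarith [h0 l hl, mul_nonneg (by linarith : 0 ≤ 1 - θ) (h0 l hl), mul_le_mul_of_nonneg_left t3 hz0]
  · subst hxz
    have : ((x - l) / (r - l)) * ((r - x) / (r - l)) ≤ 1 := by nlinarith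
    nlinarith
  · have hzl : 0 < r - z := by linarith [hx.2]
    set θ := (r - x) / (r - z) with hθ
    have t0 : 0 ≤ θ := div_nonneg (by linarith [hx.2]) hzl.le
    have t1 : θ ≤ 1 := by rw [hθ, div_le_one hzl]; linarith
    have hc := h.2 hr hz (by linarith : 0 ≤ 1 - θ) t0 (by ring)
    simp only [smul_eq_mul] at hc
    have ex : (1 - θ) * r + θ * z = x := by rw [hθ]; field_simp; ring
    rw [ex] at hc
    have t2 : (r - x) / (r - l) ≤ θ := by
      rw [hθ]; exact div_le_div_of_nonneg_left (by linarith [hx.2]) hzl (by linarith [hz.1])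
    have t3 : ((x - l) / (r - l)) * ((r - x) / (r - l)) ≤ θ := by nlinarith
    nlinarith [h0 r hr, mul_nonneg (by linarith : 0 ≤ 1 - θ) (h0 r hr), mul_le_mul_of_nonneg_left t3 hz0]

lemma sturm {a : ℝ → ℝ} {l r lam κ s0 : ℝ} (hlr : l < r) (ha : IntervalIntegrable a volume l r)
    (hap : ∀ᵐ x ∂(volume.restrict (Icc l r)), 0 ≤ a x)
    (han : ¬ ∀ᵐ x ∂(volume.restrict (Icc l r)), a x = 0) (hlam : 0 < lam)
    (hp : DirichletEigenpair a l r lam) (hκ : lam < κ) (hs0 : 0 ≤ s0) :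
    ∃ R : ℝ, 0 ≤ R ∧ ∀ g u u' : ℝ → ℝ, ContinuousOn (fun t => g (u t)) (Icc l r) →
      (∀ s, 0 ≤ s → 0 ≤ g s) → (∀ s, s0 ≤ s → κ * s ≤ g s) →
      LS (fun t => a t * g (u t)) l r u u' → (∀ x ∈ Icc l r, 0 ≤ u x) →
      ∀ x ∈ Icc l r, u x ≤ R := by
  obtain ⟨φ, φ', hφ1, hφ2, hφp, hφl, hφr, hφe⟩ := hp
  have hL : 0 < r - l := by linarith
  have hl : l ∈ Icc l r := ⟨le_rfl, hlr.le⟩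
  have hr : r ∈ Icc l r := ⟨hlr.le, le_rfl⟩
  have hφ0 : ∀ x ∈ Icc l r, 0 ≤ φ x := by
    intro x hx
    rcases eq_or_lt_of_le hx.1 with h | h
    · rw [← h, hφl]
    rcases eq_or_lt_of_le hx.2 with h' | h'
    · rw [h', hφr]
    exact (hφp x ⟨h, h'⟩).le
  have hφc : ContinuousOn φ (Icc l r) := fun x hx => (hφ1 x hx).continuousWithinAt
  have hu : uIcc l r = Icc l r := uIcc_of_le hlr.le
  have iaφ : IntervalIntegrable (fun t => a t * φ t) volume l r := ha.mul_continuousOn (by rwa [hu])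
  have hLSφ : LS (fun t => lam * (a t * φ t)) l r φ φ' := by
    refine ⟨hφ1, hφ2, fun x hx y hy => ?_⟩
    rw [intervalIntegral.integral_const_mul, hφe x hx, hφe y hy,
      ← intervalIntegral.integral_add_adjacent_intervals (ii_sub iaφ hl hx) (ii_sub iaφ hx hy)]
    ring
  have haφ : ∀ᵐ x ∂(volume.restrict (Icc l r)), 0 ≤ a x * φ x := by
    filter_upwards [hap, ae_restrict_mem measurableSet_Icc] with x h1 h2
    exact mul_nonneg h1 (hφ0 x h2)
  have hanti : AntitoneOn φ' (Icc l r) := hLSφ.antitone (by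
    filter_upwards [haφ] with x h1
    exact mul_nonneg hlam.le h1)
  have e0 := ftc hφ1 hφ2 hl hr
  have iφ' : IntervalIntegrable φ' volume l r := by
    apply ContinuousOn.intervalIntegrable; rwa [hu]
  have s1 : 0 ≤ φ' l := by
    have : ∫ t in l..r, φ' t ≤ ∫ t in l..r, φ' l :=
      intervalIntegral.integral_mono_on hlr.le iφ' intervalIntegrable_const (fun t ht => hanti hl ht ht.1)
    rw [intervalIntegral.integral_const, smul_eq_mul] at this
    by_contra hc
    push Not at hc
    nlinarith
  have s2 : φ' r ≤ 0 := by
    have : ∫ t in l..r, φ' r ≤ ∫ t in l..r, φ' t :=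
      intervalIntegral.integral_mono_on hlr.le intervalIntegrable_const iφ' (fun t ht => hanti ht hr ht.2)
    rw [intervalIntegral.integral_const, smul_eq_mul] at this
    by_contra hc
    push Not at hc
    nlinarith
  set q : ℝ → ℝ := fun x => (x - l) * (r - x) / (r - l)^2 with hq
  have hqc : Continuous q := by simp only [hq]; fun_prop
  have hq0 : ∀ x ∈ Icc l r, 0 ≤ q x := fun x hx =>
    div_nonneg (mul_nonneg (by linarith [hx.1]) (by linarith [hx.2])) (by positivity)
  have iaφq : IntervalIntegrable (fun t => a t * φ t * q t) volume l r :=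
    iaφ.mul_continuousOn hqc.continuousOn
  have hpos : 0 < ∫ t in l..r, a t * φ t * q t := by
    have hnn : ∀ᵐ x ∂(volume.restrict (Icc l r)), 0 ≤ a x * φ x * q x := by
      filter_upwards [haφ, ae_restrict_mem measurableSet_Icc] with x h1 h2
      exact mul_nonneg h1 (hq0 x h2)
    have h0 : 0 ≤ ∫ t in l..r, a t * φ t * q t :=
      intervalIntegral.integral_nonneg_of_ae_restrict hlr.le hnn
    refine lt_of_le_of_ne h0 (fun h => han ?_)
    have hz := (intervalIntegral.integral_eq_zero_iff_of_le_of_nonneg_ae hlr.le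
      (ae_restrict_of_ae_restrict_of_subset Ioc_subset_Icc_self hnn) iaφq).1 h.symm
    have hz2 := ae_restrict_of_ae_restrict_of_subset (Ioo_subset_Ioc_self) hz
    rw [← restrict_Ioo_eq_restrict_Icc]
    filter_upwards [hz2, ae_restrict_mem measurableSet_Ioo] with x h1 h2
    have hqx : 0 < q x := div_pos (mul_pos (by linarith [h2.1]) (by linarith [h2.2])) (by positivity)
    have := hφp x h2
    simp only [Pi.zero_apply, mul_eq_zero] at h1
    rcases h1 with (h1 | h1) | h1
    · exact h1
    · linarith
    · linarith
  have hpos2 : 0 ≤ ∫ t in l..r, a t * φ t := intervalIntegral.integral_nonneg_of_ae_restrict hlr.le haφ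
  have hκ0 : 0 < κ := hlam.trans hκ
  have hκl : 0 < κ - lam := by linarith
  refine ⟨(κ * s0 * ∫ t in l..r, a t * φ t) / ((κ - lam) * ∫ t in l..r, a t * φ t * q t),
    by positivity, ?_⟩
  intro g u u' hgc hg0 hgκ hs hu0 z hz
  rw [le_div_iff₀ (by positivity)]
  have iag : IntervalIntegrable (fun t => a t * g (u t)) volume l r :=
    ha.mul_continuousOn (by rwa [hu])
  have hconc : ConcaveOn ℝ (Icc l r) u := hs.concave (by
    filter_upwards [hap, ae_restrict_mem measurableSet_Icc] with x h1 h2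
    exact mul_nonneg h1 (hg0 _ (hu0 x h2)))
  have iu' : IntervalIntegrable u' volume l r := by
    apply ContinuousOn.intervalIntegrable; rw [hu]; exact hs.2.1
  have I1 := ibp hlr.le (F := u') (f := fun t => -(a t * g (u t))) (H := φ) (h := φ') iag.neg iφ'
    (fun x hx => by rw [intervalIntegral.integral_neg, hs.2.2 l hl x hx]; ring)
    (fun x hx => ftc hφ1 hφ2 hl hx)
  have I2 := ibp hlr.le (F := φ') (f := fun t => -(lam * (a t * φ t))) (H := u) (h := u') (iaφ.const_mul lam).neg iu'
    (fun x hx => by rw [intervalIntegral.integral_neg, hLSφ.2.2 l hl x hx]; ring)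
    (fun x hx => ftc hs.1 hs.2.1 hl hx)
  have j1 : IntervalIntegrable (fun x => -(a x * g (u x)) * φ x + u' x * φ' x) volume l r :=
    (iag.neg.mul_continuousOn (by rwa [hu])).add (iu'.mul_continuousOn (by rwa [hu]))
  have j2 : IntervalIntegrable (fun x => -(lam * (a x * φ x)) * u x + φ' x * u' x) volume l r :=
    ((iaφ.const_mul lam).neg.mul_continuousOn (by rw [hu]; exact hs.cont)).add
      (iφ'.mul_continuousOn (by rw [hu]; exact hs.2.1))
  have J := intervalIntegral.integral_sub j2 j1
  rw [I1, I2, hφl, hφr] at J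
  have hneg : ∫ x in l..r, ((-(lam * (a x * φ x)) * u x + φ' x * u' x) - (-(a x * g (u x)) * φ x + u' x * φ' x)) ≤ 0 := by
    rw [J]
    have := hu0 l hl
    have := hu0 r hr
    nlinarith
  have hlow : ∫ x in l..r, ((κ - lam) * u z * (a x * φ x * q x) - κ * s0 * (a x * φ x)) ≤
      ∫ x in l..r, ((-(lam * (a x * φ x)) * u x + φ' x * u' x) - (-(a x * g (u x)) * φ x + u' x * φ' x)) := by
    apply intervalIntegral.integral_mono_ae_restrict hlr.le ((iaφq.const_mul _).sub (iaφ.const_mul _)) (j2.sub j1)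
    filter_upwards [haφ, ae_restrict_mem measurableSet_Icc] with x h1 h2
    have hq1 := concave_low hlr hconc hu0 h2 hz
    have hux := hu0 x h2
    have hk : (κ - lam) * u x - κ * s0 ≤ g (u x) - lam * u x := by
      rcases le_total s0 (u x) with h | h
      · have := hgκ _ h
        nlinarith
      · have := hg0 _ hux
        nlinarith
    have hk2 : (κ - lam) * (u z * q x) - κ * s0 ≤ g (u x) - lam * u x :=
      le_trans (by have := mul_le_mul_of_nonneg_left hq1 hκl.le; linarith) hk
    have := mul_le_mul_of_nonneg_left hk2 h1
    linarith
  rw [intervalIntegral.integral_sub (iaφq.const_mul _) (iaφ.const_mul _),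
    intervalIntegral.integral_const_mul, intervalIntegral.integral_const_mul] at hlow
  linarith


structure NG (g : ℝ → ℝ) (K : ℝ) : Prop where
  cont : Continuous g
  neg : ∀ s, s ≤ 0 → g s = 0
  pos : ∀ s, 0 < s → 0 < g s
  lin : ∀ s, 0 ≤ s → g s ≤ K * s
  K0 : 0 ≤ K

lemma NG.nonneg {g : ℝ → ℝ} {K : ℝ} (h : NG g K) (s : ℝ) : 0 ≤ g s := by
  rcases le_or_gt s 0 with h1 | h1
  · rw [h.neg s h1]
  · exact (h.pos s h1).le

lemma NG.abs_le {g : ℝ → ℝ} {K : ℝ} (h : NG g K) (s : ℝ) : |g s| ≤ K * |s| := by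
  rcases le_or_gt s 0 with h1 | h1
  · rw [h.neg s h1, abs_zero]; exact mul_nonneg h.K0 (abs_nonneg _)
  · rw [abs_of_nonneg (h.nonneg s), abs_of_pos h1]; exact h.lin s h1.le

lemma NG.ii {g : ℝ → ℝ} {K : ℝ} (h : NG g K) {a : ℝ → ℝ} {l r : ℝ} {u : ℝ → ℝ} (hlr : l ≤ r)
    (ha : IntervalIntegrable a volume l r) (hu : ContinuousOn u (Icc l r)) :
    IntervalIntegrable (fun t => a t * g (u t)) volume l r :=
  ha.mul_continuousOn (by rw [uIcc_of_le hlr]; exact h.cont.comp_continuousOn hu)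

lemma after_zero {g : ℝ → ℝ} {K T : ℝ} (hg : NG g K) {a : ℝ → ℝ}
    (ha : IntervalIntegrable a volume 0 T) {u u' : ℝ → ℝ}
    (hs : LS (fun t => a t * g (u t)) 0 T u u') {x1 : ℝ} (hx1 : x1 ∈ Icc 0 T)
    (h1 : u x1 ≤ 0) (h2 : u' x1 ≤ 0) :
    ∀ x ∈ Icc x1 T, u x = u x1 + u' x1 * (x - x1) ∧ u' x = u' x1 := by
  have hT : T ∈ Icc 0 T := ⟨hx1.1.trans hx1.2, le_rfl⟩
  obtain ⟨E, hE, H⟩ := gron x1 T K hg.K0 a (ii_sub ha hx1 hT)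
  have hs' := hs.mono hx1.1 le_rfl
  have key := H (fun x => u x - (u x1 + u' x1 * (x - x1))) (fun x => u' x - u' x1) (fun t => g (u t))
    ⟨fun x hx => by
      have d2 : HasDerivWithinAt (fun x => u x1 + u' x1 * (x - x1)) (u' x1) (Icc x1 T) x := by
        have := (((hasDerivAt_id x).sub_const x1).const_mul (u' x1)).const_add (u x1)
        simpa using this.hasDerivWithinAt
      exact (hs'.1 x hx).sub d2, hs'.2.1.sub continuousOn_const,
      fun x hx y hy => by have := hs'.2.2 x hx y hy; linarith⟩
    (fun x hx => by
      rcases le_or_gt (u x) 0 with h | h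
      · rw [hg.neg _ h, abs_zero]; exact mul_nonneg hg.K0 (abs_nonneg _)
      · have hle : u x ≤ u x - (u x1 + u' x1 * (x - x1)) := by nlinarith [hx.1]
        rw [abs_of_nonneg (hg.nonneg _)]
        exact (hg.lin _ h.le).trans (mul_le_mul_of_nonneg_left (hle.trans (le_abs_self _)) hg.K0))
    x1 ⟨le_rfl, hx1.2⟩
  intro x hx
  have := key x hx
  simp only [sub_self, mul_zero, add_zero, abs_zero] at this
  have p1 := abs_nonneg (u x - (u x1 + u' x1 * (x - x1)))
  have p2 := abs_nonneg (u' x - u' x1)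
  constructor
  · have : |u x - (u x1 + u' x1 * (x - x1))| = 0 := by linarith
    linarith [abs_eq_zero.1 this]
  · have : |u' x - u' x1| = 0 := by linarith
    linarith [abs_eq_zero.1 this]

lemma hits_zero {g : ℝ → ℝ} {K T : ℝ} (hg : NG g K) {a : ℝ → ℝ}
    (ha : IntervalIntegrable a volume 0 T) {u u' : ℝ → ℝ}
    (hs : LS (fun t => a t * g (u t)) 0 T u u') (h0 : 0 ≤ u 0) (h0' : 0 < u 0 ∨ 0 < u' 0) {x1 : ℝ}
    (hx1 : x1 ∈ Icc 0 T) (hx1p : 0 < x1)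
    (h1 : u x1 ≤ 0) : u T ≤ 0 ∧ u' T < 0 := by
  have hT0 : 0 < T := hx1p.trans_le hx1.2
  have hT : T ∈ Icc 0 T := ⟨hT0.le, le_rfl⟩
  have h00 : (0:ℝ) ∈ Icc 0 T := ⟨le_rfl, hT0.le⟩
  have hz : ∃ z, 0 ≤ z ∧ z < x1 ∧ 0 < u z := by
    by_cases hc : 0 < u 0
    · exact ⟨0, le_rfl, hx1p, hc⟩
    have hd : 0 < u' 0 := by tauto
    have hu0 : u 0 = 0 := le_antisymm (not_lt.1 hc) h0
    have d : HasDerivWithinAt u (u' 0) (Ioi 0) 0 :=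
      (hs.1 0 h00).mono_of_mem_nhdsWithin (mem_of_superset (Ioc_mem_nhdsGT hT0) Ioc_subset_Icc_self)
    rw [hasDerivWithinAt_iff_tendsto_slope' (by simp)] at d
    have e1 := d.eventually (lt_mem_nhds hd)
    have e2 : ∀ᶠ x in nhdsWithin (0:ℝ) (Ioi 0), x ∈ Ioo 0 x1 := Ioo_mem_nhdsGT hx1p
    obtain ⟨z, hz1, hz2⟩ := (e1.and e2).exists
    refine ⟨z, hz2.1.le, hz2.2, ?_⟩
    rw [slope_def_field, hu0, sub_zero, sub_zero] at hz1
    have := hz2.1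
    by_contra hc2
    exact absurd hz1 (not_lt.2 (div_nonpos_of_nonpos_of_nonneg (not_lt.1 hc2) this.le))
  obtain ⟨z, hz0, hzx, huz⟩ := hz
  have hzI : Icc z x1 ⊆ Icc 0 T := Icc_subset_Icc hz0 hx1.2
  have hcl : IsCompact {x ∈ Icc z x1 | u x ≤ 0} := by
    have : IsClosed {x ∈ Icc z x1 | u x ≤ 0} :=
      (hs.cont.mono hzI).preimage_isClosed_of_isClosed isClosed_Icc isClosed_Iic
    exact isCompact_Icc.of_isClosed_subset this (fun x hx => hx.1)
  obtain ⟨y, ⟨hyI, huy⟩, hymin⟩ := hcl.exists_isLeast ⟨x1, ⟨hzx.le, le_rfl⟩, h1⟩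
  have hzy : z < y := lt_of_le_of_ne hyI.1 (fun h => by rw [← h] at huy; linarith)
  have hpos : ∀ x ∈ Ioo z y, 0 < u x := by
    intro x hx
    by_contra hc
    exact absurd (hymin ⟨⟨hx.1.le, hx.2.le.trans hyI.2⟩, not_lt.1 hc⟩) (not_le.2 hx.2)
  have hyT : y ∈ Icc 0 T := hzI hyI
  have hnb : Ioo z y ∈ nhdsWithin y (Iio y) := Ioo_mem_nhdsLT hzy
  have hmem : Icc 0 T ∈ nhdsWithin y (Iio y) :=
    mem_of_superset hnb (fun x hx => ⟨hz0.trans hx.1.le, hx.2.le.trans hyT.2⟩)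
  have d : HasDerivWithinAt u (u' y) (Iio y) y := (hs.1 y hyT).mono_of_mem_nhdsWithin hmem
  have huy0 : u y = 0 := by
    refine le_antisymm huy (ge_of_tendsto d.continuousWithinAt ?_)
    filter_upwards [hnb] with x hx using (hpos x hx).le
  have hu'y : u' y ≤ 0 := by
    rw [hasDerivWithinAt_iff_tendsto_slope' (by simp)] at d
    refine le_of_tendsto d ?_
    filter_upwards [hnb] with x hx
    rw [slope_def_field, huy0]
    have := hpos x hx
    exact div_nonpos_of_nonneg_of_nonpos (by linarith) (by linarith [hx.2])
  have hu'y2 : u' y ≠ 0 := by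
    intro h
    obtain ⟨E, hE, H⟩ := gron 0 T K hg.K0 a ha
    have := H u u' _ hs (fun x _ => hg.abs_le _) y hyT 0 h00
    rw [huy0, h, abs_zero, add_zero, mul_zero] at this
    have q1 := le_abs_self (u 0)
    have q2 := le_abs_self (u' 0)
    have q3 := abs_nonneg (u 0)
    have q4 := abs_nonneg (u' 0)
    rcases h0' with h | h <;> linarith
  have hlt : u' y < 0 := lt_of_le_of_ne hu'y hu'y2
  obtain ⟨r1, r2⟩ := after_zero hg ha hs hyT huy hu'y T ⟨hyT.2, le_rfl⟩
  rw [r1, r2, huy0]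
  exact ⟨by nlinarith [hyT.2], hlt⟩

lemma large {K T : ℝ} (hK : 0 ≤ K) {a : ℝ → ℝ}
    (ha : IntervalIntegrable a volume 0 T) {l r R1 : ℝ} (hl0 : 0 ≤ l) (hlr : l < r) (hrT : r ≤ T) 
    (hR1 : 0 ≤ R1) :
    ∃ R0 : ℝ, ∀ g u u' : ℝ → ℝ, NG g K → LS (fun t => a t * g (u t)) 0 T u u' →
      (∀ x ∈ Icc l r, 0 ≤ u x ∧ u x ≤ R1) → |u 0| + |u' 0| ≤ R0 := by
  obtain ⟨E, hE, H⟩ := gron 0 T K hK a ha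
  have hl : l ∈ Icc l r := ⟨le_rfl, hlr.le⟩
  have hlT : l ∈ Icc 0 T := ⟨hl0, hlr.le.trans hrT⟩
  have hr : r ∈ Icc l r := ⟨hlr.le, le_rfl⟩
  have hrT' : r ∈ Icc 0 T := ⟨hl0.trans hlr.le, hrT⟩
  have h00 : (0:ℝ) ∈ Icc 0 T := ⟨le_rfl, hlT.1.trans hlT.2⟩
  set A := ∫ t in l..r, |a t| with hA
  have hL : 0 < r - l := by linarith
  refine ⟨E * (R1 + (R1 / (r - l) + K * R1 * A)), fun g u u' hg hs hu => ?_⟩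
  refine (H u u' _ hs (fun x _ => hg.abs_le _) l hlT 0 h00).trans ?_
  apply mul_le_mul_of_nonneg_left _ (by linarith)
  have b1 : |u l| ≤ R1 := by rw [abs_of_nonneg (hu l hl).1]; exact (hu l hl).2
  have hs' := hs.mono hl0 hrT
  have ial := ii_sub ha hlT hrT'
  have b2 : ∀ x ∈ Icc l r, |u' l - u' x| ≤ K * R1 * A := by
    intro x hx
    have := hs'.2.2 l hl x hx
    have e : u' l - u' x = ∫ t in l..x, a t * g (u t) := by linarith
    rw [e]
    have hb : ∀ᵐ t, t ∈ Ioc l x → ‖a t * g (u t)‖ ≤ K * R1 * |a t| := by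
      refine ae_of_all _ (fun t ht => ?_)
      have ht' : t ∈ Icc l r := ⟨ht.1.le, ht.2.trans hx.2⟩
      have h1 := hu t ht'
      have h2 : |g (u t)| ≤ K * R1 := (hg.abs_le _).trans (mul_le_mul_of_nonneg_left (by rw [abs_of_nonneg h1.1]; exact h1.2) hK)
      rw [Real.norm_eq_abs, abs_mul]
      nlinarith [abs_nonneg (a t)]
    have h3 := intervalIntegral.norm_integral_le_of_norm_le hx.1 hb ((ii_sub ial hl hx).abs.const_mul _)
    rw [intervalIntegral.integral_const_mul] at h3
    refine h3.trans (mul_le_mul_of_nonneg_left ?_ (by positivity))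
    exact intervalIntegral.integral_mono_interval le_rfl hx.1 hx.2 (ae_of_all _ fun t => abs_nonneg _) ial.abs
  have e := ftc hs'.1 hs'.2.1 hl hr
  have hu'i : IntervalIntegrable u' volume l r := by
    apply ContinuousOn.intervalIntegrable; rw [uIcc_of_le hlr.le]; exact hs'.2.1
  have b3 : |∫ t in l..r, (u' l - u' t)| ≤ K * R1 * A * |r - l| :=
    intervalIntegral.norm_integral_le_of_norm_le_const (f := fun t => u' l - u' t) (C := K * R1 * A) (fun t ht => by
      rw [uIoc_of_le hlr.le] at ht
      exact b2 t ⟨ht.1.le, ht.2⟩)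
  rw [intervalIntegral.integral_sub intervalIntegrable_const hu'i, intervalIntegral.integral_const, smul_eq_mul,
    abs_of_pos hL] at b3
  have b4 : |u r - u l| ≤ R1 := by
    have := hu l hl
    have := hu r hr
    rw [abs_le]; constructor <;> linarith
  have b5 : (r - l) * |u' l| ≤ R1 + K * R1 * A * (r - l) := by
    have : (r - l) * |u' l| = |(r - l) * u' l| := by rw [abs_mul, abs_of_pos hL]
    rw [this]
    have e2 : (r - l) * u' l = ((r - l) * u' l - ∫ t in l..r, u' t) + (u r - u l) := by linarith
    rw [e2]
    exact (abs_add_le _ _).trans (by linarith)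
  have b6 : |u' l| ≤ R1 / (r - l) + K * R1 * A := by
    have : |u' l| ≤ (R1 + K * R1 * A * (r - l)) / (r - l) := by
      rw [le_div_iff₀ hL]; linarith
    refine this.trans (le_of_eq ?_)
    field_simp
  linarith

lemma small {g : ℝ → ℝ} {K T : ℝ} (hT : 0 < T) (hg : NG g K) (hreg : RegOscAtZero g)
    (hg0 : Tendsto (fun s => g s / s) (nhdsWithin 0 (Ioi 0)) (nhds 0)) {a : ℝ → ℝ}
    (ha : IntervalIntegrable a volume 0 T) (ha2 : (∫ x in (0:ℝ)..T, a x) < 0) :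
    ∃ r0 : ℝ, 0 < r0 ∧ ∀ u u' : ℝ → ℝ, LS (fun t => a t * g (u t)) 0 T u u' → 0 ≤ u 0 →
      0 < u 0 + |u' 0| → u 0 + |u' 0| ≤ r0 →
      |u T - u 0 - u' 0 * T| ≤ T / 4 * (u 0 + |u' 0|) ∧
      (u' 0 = 0 ∨ u T = u 0 → 0 < u' T - u' 0) := by
  obtain ⟨E, hE, H⟩ := gron 0 T K hg.K0 a ha
  have h00 : (0:ℝ) ∈ Icc 0 T := ⟨le_rfl, hT.le⟩
  have hTT : T ∈ Icc 0 T := ⟨hT.le, le_rfl⟩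
  set A := ∫ t in (0:ℝ)..T, |a t| with hA
  set I0 := -∫ t in (0:ℝ)..T, a t with hI0
  have hI0p : 0 < I0 := by rw [hI0]; linarith
  have hAp : 0 < A := by
    have : |∫ t in (0:ℝ)..T, a t| ≤ A := intervalIntegral.abs_integral_le_integral_abs hT.le
    have := neg_abs_le (∫ t in (0:ℝ)..T, a t)
    linarith
  obtain ⟨δ, hδ, η, hη, hro⟩ := hreg (I0 / (2 * A)) (by positivity)
  set ε' := min (T/4) (η/8) with hε'
  have hε'p : 0 < ε' := lt_min (by linarith) (by linarith)
  have hε'1 : ε' ≤ T/4 := min_le_left _ _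
  have hε'2 : ε' ≤ η/8 := min_le_right _ _
  set ε := ε' / (T * A * E) with hε
  have hE0 : 0 < E := by linarith
  have hεp : 0 < ε := by positivity
  have hev := hg0.eventually (gt_mem_nhds hεp)
  obtain ⟨s1, hs1, hs1'⟩ := (mem_nhdsGT_iff_exists_Ioc_subset).1 hev
  have hs1 : 0 < s1 := hs1
  have hsm : ∀ s, 0 ≤ s → s ≤ s1 → g s ≤ ε * s := by
    intro s h1 h2
    rcases eq_or_lt_of_le h1 with h | h
    · rw [← h, hg.neg 0 le_rfl, mul_zero]
    · have : g s / s < ε := hs1' ⟨h, h2⟩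
      rw [div_lt_iff₀ h] at this
      exact this.le
  refine ⟨min (s1 / E) (δ/2), lt_min (by positivity) (by positivity), fun u u' hs hc hp hpr => ?_⟩
  set p := u 0 + |u' 0| with hpdef
  have hp1 : E * p ≤ s1 := by
    have := hpr.trans (min_le_left _ _)
    rw [le_div_iff₀ hE0] at this
    linarith
  have hp2 : p ≤ δ/2 := hpr.trans (min_le_right _ _)
  have hub : ∀ x ∈ Icc 0 T, |u x| ≤ E * p := by
    intro x hx
    have := H u u' _ hs (fun x _ => hg.abs_le _) 0 h00 x hx
    rw [abs_of_nonneg hc] at this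
    linarith [abs_nonneg (u' x)]
  have hgb : ∀ x ∈ Icc 0 T, |g (u x)| ≤ ε * (E * p) := by
    intro x hx
    rw [abs_of_nonneg (hg.nonneg _)]
    rcases le_or_gt (u x) 0 with h | h
    · rw [hg.neg _ h]; positivity
    · have h1 := hub x hx
      rw [abs_of_pos h] at h1
      exact (hsm _ h.le (h1.trans hp1)).trans (mul_le_mul_of_nonneg_left h1 hεp.le)
  have hu'b : ∀ x ∈ Icc 0 T, |u' x - u' 0| ≤ ε * (E * p) * A := by
    intro x hx
    have := hs.2.2 0 h00 x hx
    have e : u' x - u' 0 = -∫ t in (0:ℝ)..x, a t * g (u t) := by linarith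
    rw [e, abs_neg]
    have hb : ∀ᵐ t, t ∈ Ioc 0 x → ‖a t * g (u t)‖ ≤ ε * (E * p) * |a t| := by
      refine ae_of_all _ (fun t ht => ?_)
      have h2 := hgb t ⟨ht.1.le, ht.2.trans hx.2⟩
      rw [Real.norm_eq_abs, abs_mul]
      nlinarith [abs_nonneg (a t)]
    have h3 := intervalIntegral.norm_integral_le_of_norm_le hx.1 hb ((ii_sub ha h00 hx).abs.const_mul _)
    rw [intervalIntegral.integral_const_mul] at h3
    refine h3.trans (mul_le_mul_of_nonneg_left ?_ (by positivity))
    exact intervalIntegral.integral_mono_interval le_rfl hx.1 hx.2 (ae_of_all _ fun t => abs_nonneg _) ha.abs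
  have hεε : ε * (E * p) * A * T = ε' * p := by
    rw [hε]; field_simp
  have hdev : ∀ x ∈ Icc 0 T, |u x - u 0 - u' 0 * x| ≤ ε' * p := by
    intro x hx
    have e := ftc hs.1 hs.2.1 h00 hx
    have hu'i : IntervalIntegrable u' volume 0 x := by
      apply ContinuousOn.intervalIntegrable; rw [uIcc_of_le hx.1]
      exact hs.2.1.mono (Icc_subset_Icc le_rfl hx.2)
    have b3 : |∫ t in (0:ℝ)..x, (u' t - u' 0)| ≤ ε * (E * p) * A * |x - 0| :=
      intervalIntegral.norm_integral_le_of_norm_le_const (f := fun t => u' t - u' 0) (C := ε * (E * p) * A) (fun t ht => by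
        rw [uIoc_of_le hx.1] at ht
        exact hu'b t ⟨ht.1.le, ht.2.trans hx.2⟩)
    rw [intervalIntegral.integral_sub hu'i intervalIntegrable_const, intervalIntegral.integral_const, smul_eq_mul,
      sub_zero, abs_of_nonneg hx.1] at b3
    have e2 : u x - u 0 - u' 0 * x = (∫ t in (0:ℝ)..x, u' t) - x * u' 0 := by linarith
    rw [e2]
    refine b3.trans ?_
    rw [← hεε]
    exact mul_le_mul_of_nonneg_left hx.2 (by positivity)
  refine ⟨(hdev T hTT).trans (mul_le_mul_of_nonneg_right hε'1 hp.le), fun hor => ?_⟩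
  have hdT : |u' 0| * T ≤ ε' * p := by
    rcases hor with h | h
    · rw [h, abs_zero, zero_mul]; positivity
    · have := hdev T hTT
      rw [h, sub_self, zero_sub, abs_neg, abs_mul, abs_of_pos hT] at this
      exact this
  have hd4 : |u' 0| ≤ p / 4 := by
    have : |u' 0| * T ≤ (p/4) * T := hdT.trans (by nlinarith)
    exact le_of_mul_le_mul_right this hT
  have hpc : p ≤ 2 * u 0 := by linarith
  have hc0 : 0 < u 0 := by linarith
  have hclose : ∀ x ∈ Icc 0 T, |u x - u 0| ≤ η / 2 * u 0 := by
    intro x hx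
    have h1 := hdev x hx
    have h2 : |u' 0 * x| ≤ ε' * p := by
      rw [abs_mul, abs_of_nonneg hx.1]
      exact (mul_le_mul_of_nonneg_left hx.2 (abs_nonneg _)).trans hdT
    have e : u x - u 0 = (u x - u 0 - u' 0 * x) + u' 0 * x := by ring
    rw [e]
    refine (abs_add_le _ _).trans ?_
    have : ε' * p ≤ η/8 * (2 * u 0) := mul_le_mul hε'2 hpc hp.le (by positivity)
    linarith
  have hgc := hg.pos _ hc0
  have hgclose : ∀ x ∈ Icc 0 T, |g (u x) - g (u 0)| ≤ I0 / (2 * A) * g (u 0) := by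
    intro x hx
    have := hro (u 0) (u x / u 0) hc0 (by linarith [abs_nonneg (u' 0)]) (by
      have h1 := hclose x hx
      have : u x / u 0 - 1 = (u x - u 0) / u 0 := by field_simp
      rw [this, abs_div, abs_of_pos hc0, div_lt_iff₀ hc0]
      nlinarith)
    rw [div_mul_cancel₀ _ hc0.ne'] at this
    have e : g (u x) / g (u 0) - 1 = (g (u x) - g (u 0)) / g (u 0) := by field_simp
    rw [e, abs_div, abs_of_pos hgc, div_lt_iff₀ hgc] at this
    exact this.le
  have e := hs.2.2 0 h00 T hTT
  have ig : IntervalIntegrable (fun t => a t * g (u t)) volume 0 T := hg.ii hT.le ha hs.cont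
  have ic : IntervalIntegrable (fun t => a t * g (u 0)) volume 0 T := ha.mul_const _
  have hb : ∀ᵐ t, t ∈ Ioc 0 T → ‖a t * g (u t) - a t * g (u 0)‖ ≤ (I0 / (2 * A) * g (u 0)) * |a t| := by
    refine ae_of_all _ (fun t ht => ?_)
    have h2 := hgclose t ⟨ht.1.le, ht.2⟩
    rw [← mul_sub, Real.norm_eq_abs, abs_mul]
    nlinarith [abs_nonneg (a t)]
  have h3 := intervalIntegral.norm_integral_le_of_norm_le hT.le hb (ha.abs.const_mul _)
  rw [intervalIntegral.integral_const_mul, intervalIntegral.integral_sub ig ic, intervalIntegral.integral_mul_const,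
    Real.norm_eq_abs] at h3
  have h4 := (abs_le.1 h3).2
  have e5 : I0 / (2 * A) * g (u 0) * A = I0 / 2 * g (u 0) := by field_simp
  change _ ≤ I0 / (2 * A) * g (u 0) * A at h4
  rw [e5] at h4
  have h6 : (∫ t in (0:ℝ)..T, a t) = -I0 := by rw [hI0]; ring
  rw [h6] at h4
  have : 0 < I0 * g (u 0) := mul_pos hI0p hgc
  simp only at e
  linarith


noncomputable def US (a g : ℝ → ℝ) (h : ℝ) : ℕ → ℝ × ℝ → ℝ → ℝ
  | 0, p, _ => p.1
  | k + 1, p, x => p.1 + ∫ s in (0:ℝ)..x, (p.2 - ∫ t in (0:ℝ)..s, a t * g (US a g h k p (max (t - h) 0)))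

noncomputable def VS (a g : ℝ → ℝ) (h : ℝ) (k : ℕ) (p : ℝ × ℝ) (s : ℝ) : ℝ :=
  p.2 - ∫ t in (0:ℝ)..s, a t * g (US a g h k p (max (t - h) 0))

lemma US_succ (a g : ℝ → ℝ) (h : ℝ) (k : ℕ) (p : ℝ × ℝ) (x : ℝ) :
    US a g h (k + 1) p x = p.1 + ∫ s in (0:ℝ)..x, VS a g h k p s := rfl

lemma cont_prim {a g : ℝ → ℝ} {M h : ℝ} (ha : Integrable a) (hg : Continuous g) (hM : ∀ s, |g s| ≤ M)
    {W : ℝ × ℝ → ℝ → ℝ} (hW : Continuous (fun q : (ℝ × ℝ) × ℝ => W q.1 q.2)) :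
    Continuous (fun q : (ℝ × ℝ) × ℝ => ∫ t in (0:ℝ)..q.2, a t * g (W q.1 (max (t - h) 0))) := by
  rw [continuous_iff_continuousAt]
  rintro ⟨p, b⟩
  have hWt : ∀ p, Continuous (fun t : ℝ => g (W p (max (t - h) 0))) := fun p =>
    hg.comp (hW.comp (by fun_prop : Continuous (fun t : ℝ => ((p, max (t - h) 0) : (ℝ × ℝ) × ℝ))))
  refine intervalIntegral.continuousAt_parametric_primitive_of_dominated
    (F := fun p t => a t * g (W p (max (t - h) 0))) (fun t => |a t| * M)
    (-(1 + |b|)) (1 + |b|) (fun p => ?_) ?_ ?_ ?_ ?_ ?_ ?_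
  · exact (ha.aestronglyMeasurable.mul (hWt p).aestronglyMeasurable).restrict
  · refine Eventually.of_forall fun p => ae_of_all _ fun t => ?_
    rw [Real.norm_eq_abs, abs_mul]
    exact mul_le_mul_of_nonneg_left (hM _) (abs_nonneg _)
  · exact (ha.abs.mul_const M).intervalIntegrable
  · refine ae_of_all _ fun t => ?_
    apply Continuous.continuousAt
    exact continuous_const.mul (hg.comp (hW.comp (by fun_prop : Continuous (fun p : ℝ × ℝ => ((p, max (t - h) 0) : (ℝ × ℝ) × ℝ)))))
  · constructor <;> linarith [abs_nonneg b]
  · constructor <;> linarith [abs_nonneg b, neg_abs_le b, le_abs_self b]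
  · simp

lemma US_VS_cont {a g : ℝ → ℝ} {M h : ℝ} (ha : Integrable a) (hg : Continuous g) (hM : ∀ s, |g s| ≤ M)
    (k : ℕ) : Continuous (fun q : (ℝ × ℝ) × ℝ => US a g h k q.1 q.2) ∧
      Continuous (fun q : (ℝ × ℝ) × ℝ => VS a g h k q.1 q.2) := by
  have hV : ∀ k, Continuous (fun q : (ℝ × ℝ) × ℝ => US a g h k q.1 q.2) →
      Continuous (fun q : (ℝ × ℝ) × ℝ => VS a g h k q.1 q.2) := fun k hk =>
    (continuous_fst.snd).sub (cont_prim ha hg hM hk)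
  have hU : Continuous (fun q : (ℝ × ℝ) × ℝ => US a g h k q.1 q.2) := by
    induction k with
    | zero => simp only [US]; fun_prop
    | succ k ih =>
      have := hV k ih
      exact (continuous_fst.fst).add
        (intervalIntegral.continuous_parametric_primitive_of_continuous
          (f := fun p s => VS a g h k p s) this)
  exact ⟨hU, hV k hU⟩

lemma US_fix {a g : ℝ → ℝ} {h : ℝ} (hh : 0 ≤ h) (k : ℕ) (p : ℝ × ℝ) :
    ∀ x, 0 ≤ x → x ≤ k * h → US a g h (k + 1) p x = US a g h k p x := by
  induction k with
  | zero =>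
    intro x h0 h1
    have : x = 0 := by simp at h1; linarith
    subst this; simp [US]
  | succ k ih =>
    intro x h0 h1
    rw [US_succ, US_succ]
    congr 1
    apply intervalIntegral.integral_congr
    intro s hs
    rw [uIcc_of_le h0] at hs
    simp only [VS]
    congr 1
    apply intervalIntegral.integral_congr
    intro t ht
    rw [uIcc_of_le hs.1] at ht
    have : US a g h (k + 1) p (max (t - h) 0) = US a g h k p (max (t - h) 0) := by
      apply ih
      · exact le_max_right _ _
      · have hk : (0:ℝ) ≤ k * h := by positivity
        refine max_le ?_ hk
        have := ht.2.trans (hs.2.trans h1)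
        push_cast at this; linarith
    simp only [this]

/-- approximate solutions -/
def AS (a g : ℝ → ℝ) (h T : ℝ) (p : ℝ × ℝ) (u u' : ℝ → ℝ) : Prop :=
  Continuous u ∧ Continuous u' ∧ (∀ x, u x = p.1 + ∫ s in (0:ℝ)..x, u' s) ∧
  ∀ x ∈ Icc 0 T, u' x = p.2 - ∫ t in (0:ℝ)..x, a t * g (u (max (t - h) 0))

lemma delay {a g : ℝ → ℝ} {M : ℝ} (ha : Integrable a) (hg : Continuous g) (hM : ∀ s, |g s| ≤ M)
    {T : ℝ} (hT : 0 < T) (n : ℕ) :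
    ∃ U V : ℝ × ℝ → ℝ → ℝ, Continuous (fun q : (ℝ × ℝ) × ℝ => U q.1 q.2) ∧
      Continuous (fun q : (ℝ × ℝ) × ℝ => V q.1 q.2) ∧ ∀ p, AS a g (T / (n + 1)) T p (U p) (V p) := by
  set h := T / (n + 1) with hh
  have hhp : 0 < h := by positivity
  have hnh : ((n + 1 : ℕ) : ℝ) * h = T := by rw [hh]; push_cast; field_simp
  have c1 := (US_VS_cont (h := h) ha hg hM (n + 2)).1
  have c2 := (US_VS_cont (h := h) ha hg hM (n + 1)).2
  refine ⟨US a g h (n + 2), VS a g h (n + 1), c1, c2, fun p => ⟨?_, ?_, fun x => rfl, ?_⟩⟩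
  · exact c1.comp (by fun_prop : Continuous (fun t : ℝ => ((p, t) : (ℝ × ℝ) × ℝ)))
  · exact c2.comp (by fun_prop : Continuous (fun t : ℝ => ((p, t) : (ℝ × ℝ) × ℝ)))
  · intro x hx
    simp only [VS]
    congr 1
    apply intervalIntegral.integral_congr
    intro t ht
    rw [uIcc_of_le hx.1] at ht
    have : US a g h (n + 2) p (max (t - h) 0) = US a g h (n + 1) p (max (t - h) 0) := by
      apply US_fix hhp.le
      · exact le_max_right _ _
      · rw [hnh]; exact max_le (by linarith [ht.2, hx.2]) hT.le
    simp only [this]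


lemma AS.bound {a g : ℝ → ℝ} {M : ℝ} (ha : Integrable a) (hM : ∀ s, |g s| ≤ M)
    {T h B : ℝ} {p : ℝ × ℝ} {u u' : ℝ → ℝ} (hs : AS a g h T p u u')
    (hp1 : |p.1| ≤ B) (hp2 : |p.2| ≤ B) :
    (∀ x ∈ Icc 0 T, |u' x| ≤ B + M * ∫ t, |a t|) ∧
    (∀ x ∈ Icc 0 T, ∀ y ∈ Icc 0 T, |u x - u y| ≤ (B + M * ∫ t, |a t|) * |x - y|) ∧
    (∀ x ∈ Icc 0 T, |u x| ≤ B + (B + M * ∫ t, |a t|) * T) := by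
  obtain ⟨cu, cu', e1, e2⟩ := hs
  have hM0 : 0 ≤ M := (abs_nonneg _).trans (hM 0)
  have hB : 0 ≤ B := (abs_nonneg _).trans hp1
  have A0 : 0 ≤ ∫ t, |a t| := integral_nonneg fun t => abs_nonneg _
  have b1 : ∀ x ∈ Icc 0 T, |u' x| ≤ B + M * ∫ t, |a t| := by
    intro x hx
    rw [e2 x hx]
    refine (abs_sub _ _).trans (add_le_add hp2 ?_)
    have := intervalIntegral.norm_integral_le_of_norm_le (μ := volume) (a := 0) (b := x)
      (f := fun t => a t * g (u (max (t - h) 0))) (g := fun t => M * |a t|) hx.1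
      (ae_of_all _ fun t _ => by
        rw [Real.norm_eq_abs, abs_mul, mul_comm]
        exact mul_le_mul_of_nonneg_right (hM _) (abs_nonneg _))
      ((ha.abs.const_mul M).intervalIntegrable)
    refine this.trans ?_
    rw [intervalIntegral.integral_const_mul, intervalIntegral.integral_of_le hx.1]
    exact mul_le_mul_of_nonneg_left (setIntegral_le_integral ha.abs (ae_of_all _ fun t => abs_nonneg _)) hM0
  have b2 : ∀ x ∈ Icc 0 T, ∀ y ∈ Icc 0 T, |u x - u y| ≤ (B + M * ∫ t, |a t|) * |x - y| := by
    intro x hx y hy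
    have : u x - u y = ∫ s in y..x, u' s := by
      rw [e1 x, e1 y, ← intervalIntegral.integral_add_adjacent_intervals
        (cu'.intervalIntegrable 0 y) (cu'.intervalIntegrable y x)]
      ring
    rw [this]
    refine intervalIntegral.norm_integral_le_of_norm_le_const (f := u') fun t ht => ?_
    exact b1 t (uIcc_subset_Icc hy hx (uIoc_subset_uIcc ht))
  refine ⟨b1, b2, fun x hx => ?_⟩
  have hT : 0 ≤ T := hx.1.trans hx.2
  have h := b2 x hx 0 ⟨le_rfl, hT⟩
  have e0 : u 0 = p.1 := by rw [e1 0]; simp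
  rw [e0, sub_zero, abs_of_nonneg hx.1] at h
  have h2 : (B + M * ∫ t, |a t|) * x ≤ (B + M * ∫ t, |a t|) * T :=
    mul_le_mul_of_nonneg_left hx.2 (by positivity)
  have h3 : |u x| ≤ |u x - p.1| + |p.1| := by
    have := abs_add_le (u x - p.1) p.1
    simpa using this
  linarith

lemma compactE {a g : ℝ → ℝ} {M : ℝ} (ha : Integrable a) (hg : Continuous g) (hM : ∀ s, |g s| ≤ M)
    {T : ℝ} (hT : 0 < T) {P : Set (ℝ × ℝ)} (hP : IsCompact P) (p : ℕ → ℝ × ℝ) (hp : ∀ n, p n ∈ P)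
    (h : ℕ → ℝ) (hh0 : ∀ n, 0 ≤ h n) (hh : Tendsto h atTop (nhds 0)) (u u' : ℕ → ℝ → ℝ)
    (hs : ∀ n, AS a g (h n) T (p n) (u n) (u' n)) :
    ∃ q ∈ P, ∃ v v' : ℝ → ℝ, LS (fun t => a t * g (v t)) 0 T v v' ∧ v 0 = q.1 ∧ v' 0 = q.2 ∧
      ∃ φ : ℕ → ℕ, StrictMono φ ∧ Tendsto (fun n => p (φ n)) atTop (nhds q) ∧
        Tendsto (fun n => u (φ n) T) atTop (nhds (v T)) ∧
        Tendsto (fun n => u' (φ n) T) atTop (nhds (v' T)) := by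
  obtain ⟨B, hB⟩ := hP.isBounded.exists_norm_le
  have hb : ∀ n, _ := fun n => (hs n).bound ha hM ((norm_fst_le (p n)).trans (hB _ (hp n)))
    ((norm_snd_le (p n)).trans (hB _ (hp n)))
  set L := B + M * ∫ t, |a t| with hL
  have hM0 : 0 ≤ M := (abs_nonneg _).trans (hM 0)
  have hB0 : 0 ≤ B := (norm_nonneg _).trans (hB _ (hp 0))
  have A0 : 0 ≤ ∫ t, |a t| := integral_nonneg fun t => abs_nonneg _
  have hL0 : 0 ≤ L := by positivity
  let S : Set (BoundedContinuousFunction (Icc (0:ℝ) T) ℝ) :=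
    {f | LipschitzWith L.toNNReal f ∧ ∀ x, f x ∈ Icc (-(B + L * T)) (B + L * T)}
  have hS : IsCompact (closure S) := by
    apply BoundedContinuousFunction.arzela_ascoli _ (isCompact_Icc (a := -(B + L * T)) (b := B + L * T))
    · exact fun f x hf => hf.2 x
    · exact (LipschitzWith.uniformEquicontinuous _ L.toNNReal fun c => c.2.1).equicontinuous
  let F : ℕ → BoundedContinuousFunction (Icc (0:ℝ) T) ℝ := fun n =>
    BoundedContinuousFunction.mkOfCompact ⟨fun x => u n x, (hs n).1.comp continuous_subtype_val⟩
  have hFS : ∀ n, F n ∈ S := by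
    intro n
    refine ⟨LipschitzWith.of_dist_le_mul fun x y => ?_, fun x => ?_⟩
    · rw [Real.coe_toNNReal _ hL0]
      exact (hb n).2.1 x x.2 y y.2
    · exact abs_le.1 ((hb n).2.2 x x.2)
  obtain ⟨⟨q, f⟩, ⟨hq, -⟩, φ, hφ, hlim⟩ := (hP.prod hS).tendsto_subseq (x := fun n => (p n, F n))
    (fun n => ⟨hp n, subset_closure (hFS n)⟩)
  have l1 : Tendsto (fun n => p (φ n)) atTop (nhds q) := (continuous_fst.tendsto _).comp hlim
  have l2 : Tendsto (fun n => F (φ n)) atTop (nhds f) := (continuous_snd.tendsto _).comp hlim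
  let v : ℝ → ℝ := fun x => f (projIcc 0 T hT.le x)
  have hv : Continuous v := f.continuous.comp continuous_projIcc
  have l3 : ∀ x ∈ Icc 0 T, Tendsto (fun n => u (φ n) x) atTop (nhds (v x)) := by
    intro x hx
    have := ((continuous_eval_const (F := BoundedContinuousFunction (Icc (0:ℝ) T) ℝ) (⟨x, hx⟩ : Icc (0:ℝ) T)).tendsto f).comp l2
    simp only [v, projIcc_of_mem hT.le hx]
    exact this
  have hhφ : Tendsto (fun n => h (φ n)) atTop (nhds 0) := hh.comp hφ.tendsto_atTop
  have l4 : ∀ x ∈ Icc 0 T, Tendsto (fun n => u (φ n) (max (x - h (φ n)) 0)) atTop (nhds (v x)) := by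
    intro x hx
    have hz : Tendsto (fun n => u (φ n) (max (x - h (φ n)) 0) - u (φ n) x) atTop (nhds 0) := by
      refine squeeze_zero_norm (a := fun n => L * h (φ n)) (fun n => ?_) (by simpa using hhφ.const_mul L)
      have hm : max (x - h (φ n)) 0 ∈ Icc 0 T :=
        ⟨le_max_right _ _, max_le (by linarith [hx.2, hh0 (φ n)]) hT.le⟩
      refine ((hb (φ n)).2.1 _ hm x hx).trans (mul_le_mul_of_nonneg_left ?_ hL0)
      rw [abs_le]
      constructor
      · linarith [le_max_left (x - h (φ n)) 0]
      · have : max (x - h (φ n)) 0 ≤ x := max_le (by linarith [hh0 (φ n)]) hx.1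
        linarith [hh0 (φ n)]
    simpa using hz.add (l3 x hx)
  let v' : ℝ → ℝ := fun x => q.2 - ∫ t in (0:ℝ)..x, a t * g (v t)
  have hint : Integrable (fun t => a t * g (v t)) := by
    refine (ha.abs.mul_const M).mono' (ha.aestronglyMeasurable.mul (hg.comp hv).aestronglyMeasurable) ?_
    refine ae_of_all _ fun t => ?_
    rw [Real.norm_eq_abs, abs_mul]
    exact mul_le_mul_of_nonneg_left (hM _) (abs_nonneg _)
  have hv' : Continuous v' := continuous_const.sub
    (intervalIntegral.continuous_primitive (fun x y => hint.intervalIntegrable) 0)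
  have l5 : ∀ x ∈ Icc 0 T, Tendsto (fun n => u' (φ n) x) atTop (nhds (v' x)) := by
    intro x hx
    have : (fun n => u' (φ n) x) = fun n => (p (φ n)).2 -
        ∫ t in (0:ℝ)..x, a t * g (u (φ n) (max (t - h (φ n)) 0)) :=
      funext fun n => (hs (φ n)).2.2.2 x hx
    rw [this]
    refine ((continuous_snd.tendsto _).comp l1).sub ?_
    refine intervalIntegral.tendsto_integral_filter_of_dominated_convergence (fun t => |a t| * M)
      (Eventually.of_forall fun n => ?_) (Eventually.of_forall fun n => ae_of_all _ fun t _ => ?_) ?_ ?_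
    · have c : Continuous (fun t => g (u (φ n) (max (t - h (φ n)) 0))) :=
        hg.comp ((hs (φ n)).1.comp (by fun_prop))
      exact (ha.aestronglyMeasurable.mul c.aestronglyMeasurable).restrict
    · rw [Real.norm_eq_abs, abs_mul]
      exact mul_le_mul_of_nonneg_left (hM _) (abs_nonneg _)
    · exact (ha.abs.mul_const M).intervalIntegrable
    · refine ae_of_all _ fun t ht => ?_
      rw [uIoc_of_le hx.1] at ht
      exact ((hg.tendsto _).comp (l4 t ⟨ht.1.le, ht.2.trans hx.2⟩)).const_mul _
  have ev : ∀ x ∈ Icc 0 T, v x = q.1 + ∫ s in (0:ℝ)..x, v' s := by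
    intro x hx
    refine tendsto_nhds_unique (l3 x hx) ?_
    have : (fun n => u (φ n) x) = fun n => (p (φ n)).1 + ∫ s in (0:ℝ)..x, u' (φ n) s :=
      funext fun n => (hs (φ n)).2.2.1 x
    rw [this]
    refine ((continuous_fst.tendsto _).comp l1).add ?_
    refine intervalIntegral.tendsto_integral_filter_of_dominated_convergence (fun t => L)
      (Eventually.of_forall fun n => ((hs (φ n)).2.1.aestronglyMeasurable).restrict)
      (Eventually.of_forall fun n => ae_of_all _ fun t ht => ?_) intervalIntegrable_const 
      (ae_of_all _ fun t ht => ?_)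
    · rw [uIoc_of_le hx.1] at ht
      exact (hb (φ n)).1 t ⟨ht.1.le, ht.2.trans hx.2⟩
    · rw [uIoc_of_le hx.1] at ht
      exact l5 t ⟨ht.1.le, ht.2.trans hx.2⟩
  have h00 : (0:ℝ) ∈ Icc 0 T := ⟨le_rfl, hT.le⟩
  have hTT : T ∈ Icc 0 T := ⟨hT.le, le_rfl⟩
  refine ⟨q, hq, v, v', ⟨fun x hx => ?_, hv'.continuousOn, fun x hx y hy => ?_⟩, ?_, ?_, φ, hφ, l1,
    l3 T hTT, l5 T hTT⟩
  · have hd := ((hv'.integral_hasStrictDerivAt 0 x).hasDerivAt.const_add q.1).hasDerivWithinAt (s := Icc 0 T)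
    exact hd.congr ev (ev x hx)
  · simp only [v']
    rw [← intervalIntegral.integral_add_adjacent_intervals (hint.intervalIntegrable (a := 0) (b := x))
      (hint.intervalIntegrable (a := x) (b := y))]
    ring
  · rw [ev 0 h00]; simp
  · simp [v']


lemma LS.congr {f g : ℝ → ℝ} {T : ℝ} {u u' : ℝ → ℝ} (h : LS f 0 T u u')
    (hfg : ∀ t ∈ Ioc 0 T, f t = g t) : LS g 0 T u u' := by
  refine ⟨h.1, h.2.1, fun x hx y hy => ?_⟩
  rw [h.2.2 x hx y hy]
  congr 1
  refine intervalIntegral.integral_congr_ae (ae_of_all _ fun t ht => hfg t ?_)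
  rw [uIoc, mem_Ioc] at ht
  exact ⟨(le_min hx.1 hy.1).trans_lt ht.1, ht.2.trans (max_le hx.2 hy.2)⟩

lemma approx {g : ℝ → ℝ} {K T R : ℝ} (hT : 0 < T) (hR : 0 ≤ R) (hg : NG g K) {a : ℝ → ℝ}
    (ha : IntervalIntegrable a volume 0 T) :
    ∃ F : ℕ → ℝ × ℝ → ℝ × ℝ, (∀ n, Continuous (F n)) ∧
      ∀ P : Set (ℝ × ℝ), IsCompact P → (∀ q ∈ P, |q.1| + |q.2| ≤ R) →
      ∀ Z : Set ((ℝ × ℝ) × (ℝ × ℝ)), IsClosed Z → (∃ᶠ n in atTop, ∃ p ∈ P, (p, F n p) ∈ Z) →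
      ∃ p ∈ P, ∃ u u' : ℝ → ℝ, LS (fun t => a t * g (u t)) 0 T u u' ∧ u 0 = p.1 ∧ u' 0 = p.2 ∧
        (p, (u T, u' T)) ∈ Z := by
  obtain ⟨E, hE, H⟩ := gron 0 T K hg.K0 a ha
  set B := E * R with hB
  have hB0 : 0 ≤ B := by positivity
  have hTT : T ∈ Icc 0 T := ⟨hT.le, le_rfl⟩
  have h00 : (0:ℝ) ∈ Icc 0 T := ⟨le_rfl, hT.le⟩
  let g' : ℝ → ℝ := fun s => g (min s B)
  have hg'c : Continuous g' := hg.cont.comp (by fun_prop)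
  have hK := hg.K0
  have hmin : ∀ s, |g' s| ≤ K * |s| ∧ |g' s| ≤ K * B := by
    intro s
    rcases le_or_gt s 0 with h | h
    · have : g' s = 0 := hg.neg _ ((min_le_left _ _).trans h)
      rw [this, abs_zero]; constructor <;> positivity
    · have h1 := hg.abs_le (min s B)
      have h2 : 0 ≤ min s B := le_min h.le hB0
      rw [abs_of_nonneg h2] at h1
      rw [abs_of_pos h]
      exact ⟨h1.trans (mul_le_mul_of_nonneg_left (min_le_left _ _) hK),
        h1.trans (mul_le_mul_of_nonneg_left (min_le_right _ _) hK)⟩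
  let a' : ℝ → ℝ := (Ioc 0 T).indicator a
  have ha' : Integrable a' := by
    rw [intervalIntegrable_iff_integrableOn_Ioc_of_le hT.le] at ha
    exact ha.integrable_indicator measurableSet_Ioc
  have hd := fun n : ℕ => delay ha' hg'c (fun s => (hmin s).2) hT n
  choose U V hU hV hAS using hd
  refine ⟨fun n p => (U n p T, V n p T), fun n => ?_, fun P hP hPR Z hZ hfr => ?_⟩
  · exact ((hU n).comp (by fun_prop : Continuous (fun p : ℝ × ℝ => ((p, T) : (ℝ × ℝ) × ℝ)))).prodMk
      ((hV n).comp (by fun_prop : Continuous (fun p : ℝ × ℝ => ((p, T) : (ℝ × ℝ) × ℝ))))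
  obtain ⟨ψ, hψ, hp⟩ := extraction_of_frequently_atTop hfr
  choose p hpP hpZ using hp
  obtain ⟨q, hq, v, v', hv, e0, e0', φ, hφ, l1, l2, l3⟩ := compactE ha' hg'c (fun s => (hmin s).2) hT hP p hpP
    (fun n => T / (ψ n + 1)) (fun n => by positivity)
    ((tendsto_const_div_atTop_nhds_zero_nat T).comp
      ((tendsto_add_atTop_nat 1).comp hψ.tendsto_atTop) |>.congr (fun n => by simp)) 
    (fun n => U (ψ n) (p n)) (fun n => V (ψ n) (p n)) (fun n => hAS (ψ n) (p n))
  have hv1 : LS (fun t => a t * g' (v t)) 0 T v v' := hv.congr fun t ht => by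
    simp only [a', indicator_of_mem ht]
  refine ⟨q, hq, v, v', hv1.congr fun t ht => ?_, e0, e0', ?_⟩
  · have h1 := H v v' (fun t => g' (v t)) hv1 (fun x _ => (hmin _).1) 0 h00 t ⟨ht.1.le, ht.2⟩
    rw [e0, e0'] at h1
    have h2 : v t ≤ B := by
      have := mul_le_mul_of_nonneg_left (hPR q hq) (by linarith : 0 ≤ E)
      linarith [le_abs_self (v t), abs_nonneg (v' t)]
    simp only [g', min_eq_left h2]
  · refine hZ.mem_of_tendsto (l1.prodMk_nhds (l2.prodMk_nhds l3)) (Eventually.of_forall fun n => ?_)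
    exact hpZ (φ n)


lemma stay {θ : ℝ → ℝ} (hθ : Continuous θ) {p q α β x0 : ℝ} (hx0 : x0 ∈ Icc p q)
    (h0 : α < θ x0 ∧ θ x0 < β) (hα : ∀ x ∈ Icc p q, θ x ≠ α ∧ θ x ≠ β) :
    ∀ x ∈ Icc p q, α < θ x ∧ θ x < β := by
  intro x hx
  have hsub : uIcc x0 x ⊆ Icc p q := uIcc_subset_Icc hx0 hx
  have hiv := intermediate_value_uIcc (hθ.continuousOn (s := uIcc x0 x))
  by_contra hc
  rw [not_and_or, not_lt, not_lt] at hc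
  rcases hc with hc | hc
  · obtain ⟨y, hy, e⟩ := hiv (show α ∈ uIcc (θ x0) (θ x) from mem_uIcc.2 (Or.inr ⟨hc, h0.1.le⟩))
    exact (hα y (hsub hy)).1 e
  · obtain ⟨y, hy, e⟩ := hiv (show β ∈ uIcc (θ x0) (θ x) from mem_uIcc.2 (Or.inl ⟨h0.2.le, hc⟩))
    exact (hα y (hsub hy)).2 e

lemma topo {H1 H2 : ℝ × ℝ → ℝ} (c1 : Continuous H1) (c2 : Continuous H2) {r R : ℝ} (hrR : r ≤ R)
    (hA : ∀ ρ ∈ Icc r R, H1 (ρ, -1) < 0)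
    (hB : ∀ t ∈ Icc (-1:ℝ) 1, ¬ (H1 (r, t) = 0 ∧ H2 (r, t) ≤ 0))
    (hC : 0 < H1 (r, 1))
    (hD : ∀ ρ ∈ Icc r R, ¬ (H1 (ρ, 1) ≤ 0 ∧ 0 ≤ H2 (ρ, 1)))
    (hE : H2 (R, 1) < 0)
    (hG : ∀ t ∈ Icc (-1:ℝ) 1, ¬ (0 ≤ H1 (R, t) ∧ H2 (R, t) = 0)) :
    ∃ ρ ∈ Icc r R, ∃ t ∈ Icc (-1:ℝ) 1, H1 (ρ, t) = 0 ∧ H2 (ρ, t) = 0 := by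
  by_contra! hne
  let cl : ℝ × ℝ → ℝ × ℝ := fun q => (max r (min q.1 R), max (-1) (min q.2 1))
  have hcl : Continuous cl := by fun_prop
  have hcl1 : ∀ q, (cl q).1 ∈ Icc r R := fun q => ⟨le_max_left _ _, max_le hrR (min_le_right _ _)⟩
  have hcl2 : ∀ q, (cl q).2 ∈ Icc (-1:ℝ) 1 := fun q =>
    ⟨le_max_left _ _, max_le (by norm_num) (min_le_right _ _)⟩
  have hclid : ∀ ρ ∈ Icc r R, ∀ t ∈ Icc (-1:ℝ) 1, cl (ρ, t) = (ρ, t) := by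
    intro ρ hρ t ht
    simp [cl, min_eq_left hρ.2, max_eq_right hρ.1, min_eq_left ht.2, max_eq_right ht.1]
  let f : C(ℝ × ℝ, ℂ) := ⟨fun q => ⟨H1 (cl q), H2 (cl q)⟩, by
    have : (fun q => (⟨H1 (cl q), H2 (cl q)⟩ : ℂ)) = fun q => (H1 (cl q) : ℂ) + (H2 (cl q) : ℂ) * Complex.I := by
      ext q; exact (Complex.mk_eq_add_mul_I _ _)
    rw [this]
    have d1 := Complex.continuous_ofReal.comp (c1.comp hcl)
    have d2 := Complex.continuous_ofReal.comp (c2.comp hcl)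
    exact d1.add (d2.mul continuous_const)⟩
  have hfne : ∀ q, f q ∈ ({0}ᶜ : Set ℂ) := by
    intro q h
    have h : f q = 0 := h
    have e1 : H1 (cl q) = 0 := congrArg Complex.re h
    have e2 : H2 (cl q) = 0 := congrArg Complex.im h
    exact hne _ (hcl1 q) _ (hcl2 q) e1 e2
  have hr : r ∈ Icc r R := ⟨le_rfl, hrR⟩
  have hR : R ∈ Icc r R := ⟨hrR, le_rfl⟩
  have hm1 : (-1:ℝ) ∈ Icc (-1:ℝ) 1 := by norm_num
  have h1 : (1:ℝ) ∈ Icc (-1:ℝ) 1 := by norm_num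
  have hneg : (f (r, -1)).re < 0 := by
    change H1 (cl (r, -1)) < 0
    rw [hclid r hr _ hm1]; exact hA r hr
  have he : Complex.exp (Complex.log (-f (r, -1)) + Real.pi * Complex.I) = f (r, -1) := by
    rw [Complex.exp_add, Complex.exp_log (neg_ne_zero.2 (hfne _)), Complex.exp_pi_mul_I]; ring
  obtain ⟨L, ⟨hL0, hL⟩, -⟩ := Complex.isCoveringMapOn_exp.existsUnique_continuousMap_lifts f he hfne
  have hLf : ∀ q, Complex.exp (L q) = f q := fun q => congrFun hL q
  let θ : ℝ × ℝ → ℝ := fun q => (L q).im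
  have hθc : Continuous θ := Complex.continuous_im.comp L.continuous
  have k1 : ∀ ρ ∈ Icc r R, ∀ t ∈ Icc (-1:ℝ) 1, H1 (ρ, t) = Real.exp (L (ρ, t)).re * Real.cos (θ (ρ, t)) := by
    intro ρ hρ t ht
    rw [← Complex.exp_re, hLf]
    change _ = H1 (cl (ρ, t))
    rw [hclid ρ hρ t ht]
  have k2 : ∀ ρ ∈ Icc r R, ∀ t ∈ Icc (-1:ℝ) 1, H2 (ρ, t) = Real.exp (L (ρ, t)).re * Real.sin (θ (ρ, t)) := by
    intro ρ hρ t ht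
    rw [← Complex.exp_im, hLf]
    change _ = H2 (cl (ρ, t))
    rw [hclid ρ hρ t ht]
  have θ0 : Real.pi / 2 < θ (r, -1) ∧ θ (r, -1) < 3 * Real.pi / 2 := by
    have e : θ (r, -1) = (-f (r, -1)).arg + Real.pi := by
      simp only [θ, hL0]
      simp [Complex.log_im]
    have := Complex.abs_arg_lt_pi_div_two_iff.2 (Or.inl (by simpa using hneg : 0 < (-f (r, -1)).re))
    rw [abs_lt] at this
    rw [e]; constructor <;> linarith [this.1, this.2]
  have pp := Real.pi_pos
  have cρ : ∀ t, Continuous (fun ρ : ℝ => θ (ρ, t)) := fun t => hθc.comp (by fun_prop)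
  have ct : ∀ ρ, Continuous (fun t : ℝ => θ (ρ, t)) := fun ρ => hθc.comp (by fun_prop)
  have cos32 : Real.cos (3 * Real.pi / 2) = 0 := by
    rw [show 3 * Real.pi / 2 = Real.pi / 2 + Real.pi by ring, Real.cos_add_pi, Real.cos_pi_div_two, neg_zero]
  have sin32 : Real.sin (3 * Real.pi / 2) = -1 := by
    rw [show 3 * Real.pi / 2 = Real.pi / 2 + Real.pi by ring, Real.sin_add_pi, Real.sin_pi_div_two]
  -- edge t = -1
  have s1 := stay (cρ (-1)) hr θ0 (fun ρ hρ => by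
    have h := hA ρ hρ
    rw [k1 ρ hρ _ hm1] at h
    constructor
    · intro e; rw [e, Real.cos_pi_div_two] at h; simp at h
    · intro e; rw [e, cos32] at h; simp at h) R hR
  -- edge ρ = r
  have s2 := stay (ct r) hm1 (α := -(Real.pi / 2)) (β := 3 * Real.pi / 2) ⟨by linarith [θ0.1], θ0.2⟩ (fun t ht => by
    have h := hB t ht
    rw [k1 r hr t ht, k2 r hr t ht] at h
    constructor
    · intro e; rw [e, Real.cos_neg, Real.cos_pi_div_two, Real.sin_neg, Real.sin_pi_div_two] at h
      exact h ⟨by simp, by nlinarith [Real.exp_pos (L (r, t)).re]⟩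
    · intro e; rw [e, cos32, sin32] at h
      exact h ⟨by simp, by nlinarith [Real.exp_pos (L (r, t)).re]⟩) 1 h1
  have s3 : θ (r, 1) < Real.pi / 2 := by
    by_contra! hc
    rw [k1 r hr 1 h1] at hC
    have := Real.cos_nonpos_of_pi_div_two_le_of_le hc (by linarith [s2.2])
    nlinarith [Real.exp_pos (L (r, 1)).re]
  -- edge t = 1
  have s4 := stay (cρ 1) hr (α := -Real.pi) (β := Real.pi / 2) ⟨by linarith [s2.1], s3⟩ (fun ρ hρ => by
    have h := hD ρ hρ
    rw [k1 ρ hρ 1 h1, k2 ρ hρ 1 h1] at h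
    constructor
    · intro e; rw [e, Real.cos_neg, Real.cos_pi, Real.sin_neg, Real.sin_pi] at h
      exact h ⟨by nlinarith [Real.exp_pos (L (ρ, 1)).re], by simp⟩
    · intro e; rw [e, Real.cos_pi_div_two, Real.sin_pi_div_two] at h
      exact h ⟨by simp, by nlinarith [Real.exp_pos (L (ρ, 1)).re]⟩) R hR
  have s5 : θ (R, 1) < 0 := by
    by_contra! hc
    rw [k2 R hR 1 h1] at hE
    have := Real.sin_nonneg_of_nonneg_of_le_pi hc (by linarith [s4.2])
    nlinarith [Real.exp_pos (L (R, 1)).re]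
  have s6 := stay (ct R) h1 (α := -(2 * Real.pi)) (β := 0) ⟨by linarith [s4.1], s5⟩ (fun t ht => by
    have h := hG t ht
    rw [k1 R hR t ht, k2 R hR t ht] at h
    constructor
    · intro e; rw [e, Real.cos_neg, Real.cos_two_pi, Real.sin_neg, Real.sin_two_pi] at h
      exact h ⟨by nlinarith [Real.exp_pos (L (R, t)).re], by simp⟩
    · intro e; rw [e, Real.cos_zero, Real.sin_zero] at h
      exact h ⟨by nlinarith [Real.exp_pos (L (R, t)).re], by simp⟩) (-1) hm1
  linarith [s1.1, s6.2]


lemma far {g : ℝ → ℝ} {K T : ℝ} (hg : NG g K) {a : ℝ → ℝ}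
    (ha : IntervalIntegrable a volume 0 T) {l r R1 : ℝ} (hl0 : 0 ≤ l) (hlr : l < r) (hrT : r ≤ T)
    (hR1 : 0 ≤ R1)
    (hS : ∀ u u' : ℝ → ℝ, LS (fun t => a t * g (u t)) 0 T u u' → (∀ x ∈ Icc l r, 0 ≤ u x) →
      ∀ x ∈ Icc l r, u x ≤ R1) :
    ∃ R0 : ℝ, ∀ u u' : ℝ → ℝ, LS (fun t => a t * g (u t)) 0 T u u' → 0 ≤ u 0 →
      (0 < u 0 ∨ 0 < u' 0) → R0 < u 0 + |u' 0| → u T ≤ 0 ∧ u' T < 0 := by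
  obtain ⟨R0, h⟩ := large hg.K0 ha hl0 hlr hrT hR1
  refine ⟨R0, fun u u' hs h0 h0' hR => ?_⟩
  by_cases hz : ∃ x1 ∈ Icc 0 T, 0 < x1 ∧ u x1 ≤ 0
  · obtain ⟨x1, hx1, hp, hx⟩ := hz
    exact hits_zero hg ha hs h0 h0' hx1 hp hx
  · push Not at hz
    have hn : ∀ x ∈ Icc l r, 0 ≤ u x := by
      intro x hx
      rcases (hl0.trans hx.1).eq_or_lt with e | e
      · rw [← e]; exact h0
      · exact (hz x ⟨e.le, hx.2.trans hrT⟩ e).le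
    have := h g u u' hg hs fun x hx => ⟨hn x hx, hS u u' hs hn x hx⟩
    rw [abs_of_nonneg h0] at this
    linarith

lemma exist_neumann {g : ℝ → ℝ} {K T : ℝ} (hT : 0 < T) (hg : NG g K) {a : ℝ → ℝ}
    (ha : IntervalIntegrable a volume 0 T) {r0 R0 : ℝ} (hr0 : 0 < r0)
    (hsm : ∀ u u' : ℝ → ℝ, LS (fun t => a t * g (u t)) 0 T u u' → 0 ≤ u 0 →
      0 < u 0 + |u' 0| → u 0 + |u' 0| ≤ r0 →
      |u T - u 0 - u' 0 * T| ≤ T / 4 * (u 0 + |u' 0|) ∧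
      (u' 0 = 0 ∨ u T = u 0 → 0 < u' T - u' 0))
    (hfar : ∀ u u' : ℝ → ℝ, LS (fun t => a t * g (u t)) 0 T u u' → 0 ≤ u 0 →
      (0 < u 0 ∨ 0 < u' 0) → R0 < u 0 + |u' 0| → u T ≤ 0 ∧ u' T < 0) :
    ∃ u u' : ℝ → ℝ, LS (fun t => a t * g (u t)) 0 T u u' ∧ (∀ x ∈ Icc 0 T, 0 < u x) ∧
      u' 0 = 0 ∧ u' T = 0 := by
  set R := max (R0 + 1) r0 with hRdef
  have hrR : r0 ≤ R := le_max_right _ _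
  have hR0 : R0 < R := by linarith [le_max_left (R0 + 1) r0]
  have hR : 0 < R := hr0.trans_le hrR
  obtain ⟨F, hFc, hF⟩ := approx hT hR.le hg ha
  have e1 : ∀ᶠ n in atTop, 0 < (F n (r0, 0)).2 := by
    by_contra hc
    rw [not_eventually] at hc
    obtain ⟨p, hp, u, u', hs, e, e', hz⟩ := hF {(r0, 0)} isCompact_singleton
      (fun q hq => by rw [mem_singleton_iff.1 hq]; simp [abs_of_pos hr0, hrR]) {z | z.2.2 ≤ 0}
      (isClosed_le (by fun_prop) (by fun_prop)) (hc.mono fun n hn => ⟨_, rfl, not_lt.1 hn⟩)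
    rw [mem_singleton_iff.1 hp] at e e'
    simp only at e e'
    have := (hsm u u' hs (by rw [e]; exact hr0.le) (by rw [e, e']; simpa using hr0) (by rw [e, e']; simp)).2 (Or.inl e')
    simp only [mem_ofPred_eq] at hz
    linarith
  have e2 : ∀ᶠ n in atTop, (F n (R, 0)).2 < 0 := by
    by_contra hc
    rw [not_eventually] at hc
    obtain ⟨p, hp, u, u', hs, e, e', hz⟩ := hF {(R, 0)} isCompact_singleton
      (fun q hq => by rw [mem_singleton_iff.1 hq]; simp [abs_of_pos hR]) {z | 0 ≤ z.2.2}
      (isClosed_le (by fun_prop) (by fun_prop)) (hc.mono fun n hn => ⟨_, rfl, not_lt.1 hn⟩)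
    rw [mem_singleton_iff.1 hp] at e e'
    simp only at e e'
    have := (hfar u u' hs (by rw [e]; exact hR.le) (by rw [e]; exact Or.inl hR) (by rw [e, e']; simpa using hR0)).2
    simp only [mem_ofPred_eq] at hz
    linarith
  have e3 : ∀ᶠ n in atTop, ∃ p ∈ Icc r0 R ×ˢ ({0} : Set ℝ), (p, F n p) ∈ {z : (ℝ × ℝ) × (ℝ × ℝ) | z.2.2 = 0} := by
    filter_upwards [e1, e2] with n h1 h2
    have hc : ContinuousOn (fun c : ℝ => (F n (c, 0)).2) (Icc r0 R) :=
      (((hFc n).snd).comp (by fun_prop : Continuous fun c : ℝ => ((c, 0) : ℝ × ℝ))).continuousOn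
    obtain ⟨c, hc, e⟩ := intermediate_value_Icc' hrR hc ⟨h2.le, h1.le⟩
    exact ⟨(c, 0), ⟨hc, rfl⟩, e⟩
  obtain ⟨p, hp, u, u', hs, e, e', hz⟩ := hF _ (isCompact_Icc.prod isCompact_singleton)
    (fun q hq => by
      have h1 : q.2 = 0 := hq.2
      have h2 : q.1 ∈ Icc r0 R := hq.1
      rw [h1, abs_zero, add_zero, abs_of_pos (hr0.trans_le h2.1)]; exact h2.2) _
    (isClosed_eq (by fun_prop) (by fun_prop)) e3.frequently
  have h1 : p.2 = 0 := hp.2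
  have h2 : p.1 ∈ Icc r0 R := hp.1
  have hz : u' T = 0 := hz
  have hu0 : 0 < u 0 := by rw [e]; exact hr0.trans_le h2.1
  refine ⟨u, u', hs, fun x hx => ?_, e'.trans h1, hz⟩
  by_contra! hc
  have hx0 : 0 < x := hx.1.lt_of_ne (fun e => by rw [← e] at hc; linarith)
  linarith [(hits_zero hg ha hs hu0.le (Or.inl hu0) hx hx0 hc).2]

lemma exist_periodic {g : ℝ → ℝ} {K T : ℝ} (hT : 0 < T) (hg : NG g K) {a : ℝ → ℝ}
    (ha : IntervalIntegrable a volume 0 T) {r0 R0 : ℝ} (hr0 : 0 < r0)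
    (hsm : ∀ u u' : ℝ → ℝ, LS (fun t => a t * g (u t)) 0 T u u' → 0 ≤ u 0 →
      0 < u 0 + |u' 0| → u 0 + |u' 0| ≤ r0 →
      |u T - u 0 - u' 0 * T| ≤ T / 4 * (u 0 + |u' 0|) ∧
      (u' 0 = 0 ∨ u T = u 0 → 0 < u' T - u' 0))
    (hfar : ∀ u u' : ℝ → ℝ, LS (fun t => a t * g (u t)) 0 T u u' → 0 ≤ u 0 →
      (0 < u 0 ∨ 0 < u' 0) → R0 < u 0 + |u' 0| → u T ≤ 0 ∧ u' T < 0) :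
    ∃ u u' : ℝ → ℝ, LS (fun t => a t * g (u t)) 0 T u u' ∧ (∀ x ∈ Icc 0 T, 0 < u x) ∧
      u 0 = u T ∧ u' 0 = u' T := by
  set R := max (R0 + 1) r0 with hRdef
  have hrR : r0 ≤ R := le_max_right _ _
  have hR0 : R0 < R := by linarith [le_max_left (R0 + 1) r0]
  have hR : 0 < R := hr0.trans_le hrR
  have h00 : (0:ℝ) ∈ Icc 0 T := ⟨le_rfl, hT.le⟩
  have hTT : T ∈ Icc 0 T := ⟨hT.le, le_rfl⟩
  obtain ⟨F, hFc, hF⟩ := approx hT hR.le hg ha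
  let cv : ℝ × ℝ → ℝ × ℝ := fun s => (s.1 * (1 - |s.2|), s.1 * s.2)
  have hcv : Continuous cv := by fun_prop
  let Q : Set (ℝ × ℝ) := Icc r0 R ×ˢ Icc (-1:ℝ) 1
  have hQ : IsCompact Q := isCompact_Icc.prod isCompact_Icc
  have hcvQ : ∀ s ∈ Q, 0 ≤ (cv s).1 ∧ (cv s).1 + |(cv s).2| = s.1 := by
    intro s hs
    have h1 : 0 < s.1 := hr0.trans_le hs.1.1
    have h2 : |s.2| ≤ 1 := abs_le.2 hs.2
    refine ⟨mul_nonneg h1.le (by linarith), ?_⟩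
    simp only [cv]
    rw [abs_mul, abs_of_pos h1]; ring
  let G : ℕ → ℝ × ℝ → ℝ × ℝ := fun n s => F n (cv s) - cv s
  have hG : ∀ n, Continuous (G n) := fun n => ((hFc n).comp hcv).sub hcv
  -- transfer
  have tr : ∀ S ⊆ Q, IsCompact S → ∀ Z : Set (ℝ × ℝ), IsClosed Z → (∃ᶠ n in atTop, ∃ s ∈ S, G n s ∈ Z) →
      ∃ s ∈ S, ∃ u u' : ℝ → ℝ, LS (fun t => a t * g (u t)) 0 T u u' ∧ u 0 = (cv s).1 ∧ u' 0 = (cv s).2 ∧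
        (u T - u 0, u' T - u' 0) ∈ Z := by
    intro S hSQ hSc Z hZ hfr
    obtain ⟨p, ⟨s, hs, rfl⟩, u, u', hu, e, e', hz⟩ := hF (cv '' S) (hSc.image hcv) (by
      rintro _ ⟨s, hs, rfl⟩
      obtain ⟨h1, h2⟩ := hcvQ s (hSQ hs)
      rw [abs_of_nonneg h1, h2]
      exact (hSQ hs).1.2) {z | z.2 - z.1 ∈ Z} (hZ.preimage (by fun_prop))
      (hfr.mono fun n ⟨s, hs, h⟩ => ⟨cv s, ⟨s, hs, rfl⟩, h⟩)
    refine ⟨s, hs, u, u', hu, e, e', ?_⟩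
    rw [e, e']
    exact hz
  have tr' : ∀ S ⊆ Q, IsCompact S → ∀ Z : Set (ℝ × ℝ), IsClosed Z → 
      (∀ s ∈ S, ∀ u u' : ℝ → ℝ, LS (fun t => a t * g (u t)) 0 T u u' → u 0 = (cv s).1 → u' 0 = (cv s).2 →
        0 ≤ u 0 → u 0 + |u' 0| = s.1 → (u T - u 0, u' T - u' 0) ∉ Z) →
      ∀ᶠ n in atTop, ∀ s ∈ S, G n s ∉ Z := by
    intro S hSQ hSc Z hZ h
    by_contra hc
    rw [not_eventually] at hc
    obtain ⟨s, hs, u, u', hu, e, e', hz⟩ := tr S hSQ hSc Z hZ (hc.mono fun n hn => by push Not at hn; exact hn)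
    obtain ⟨h1, h2⟩ := hcvQ s (hSQ hs)
    exact h s hs u u' hu e e' (by rw [e]; exact h1) (by rw [e, e', h2]) hz
  -- facts about c = 0
  have neg0 : ∀ u u' : ℝ → ℝ, LS (fun t => a t * g (u t)) 0 T u u' → u 0 = 0 → u' 0 < 0 → u T < 0 := by
    intro u u' hs h1 h2
    have := (after_zero hg ha hs h00 h1.le h2.le T hTT).1
    rw [this, h1]; nlinarith
  have pos0 : ∀ u u' : ℝ → ℝ, LS (fun t => a t * g (u t)) 0 T u u' → u 0 = 0 → 0 < u' 0 →
      0 < u T ∨ u' T < 0 := by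
    intro u u' hs h1 h2
    by_cases hc : 0 < u T
    · exact Or.inl hc
    · exact Or.inr (hits_zero hg ha hs h1.ge (Or.inr h2) hTT hT (not_lt.1 hc)).2
  have hr : r0 ∈ Icc r0 R := ⟨le_rfl, hrR⟩
  have hRR : R ∈ Icc r0 R := ⟨hrR, le_rfl⟩
  have hm1 : (-1:ℝ) ∈ Icc (-1:ℝ) 1 := by norm_num
  have h1 : (1:ℝ) ∈ Icc (-1:ℝ) 1 := by norm_num
  have evA := tr' (Icc r0 R ×ˢ {-1}) (prod_mono le_rfl (by simp)) (isCompact_Icc.prod isCompact_singleton)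
    {z | 0 ≤ z.1} (isClosed_le (by fun_prop) (by fun_prop)) (by
      rintro ⟨ρ, t⟩ ⟨hρ, ht⟩ u u' hs e e' h0 hp hz
      have ht : t = -1 := ht
      subst ht
      have hρ0 : 0 < ρ := hr0.trans_le hρ.1
      simp [cv] at e e' hz
      have := neg0 u u' hs e (by rw [e']; linarith)
      linarith)
  have evB := tr' ({r0} ×ˢ Icc (-1:ℝ) 1) (prod_mono (by simpa using hrR) le_rfl) (isCompact_singleton.prod isCompact_Icc)
    {z | z.1 = 0 ∧ z.2 ≤ 0} (IsClosed.inter (s₁ := {z : ℝ × ℝ | z.1 = 0}) (s₂ := {z : ℝ × ℝ | z.2 ≤ 0})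
      (isClosed_eq (by fun_prop) (by fun_prop)) (isClosed_le (by fun_prop) (by fun_prop))) (by
      rintro ⟨ρ, t⟩ ⟨hρ, ht⟩ u u' hs e e' h0 hp hz
      have hρ : ρ = r0 := hρ
      subst hρ
      simp only [mem_ofPred_eq] at hz hp
      have := (hsm u u' hs h0 (by rw [hp]; exact hr0) hp.le).2 (Or.inr (by linarith [hz.1]))
      linarith [hz.2])
  have evC := tr' {(r0, 1)} (by rintro _ rfl; exact ⟨hr, h1⟩) isCompact_singleton
    {z | z.1 ≤ 0} (isClosed_le (by fun_prop) (by fun_prop)) (by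
      rintro _ rfl u u' hs e e' h0 hp hz
      simp [cv] at e e' hz hp
      have := (hsm u u' hs h0 (by rw [hp]; exact hr0) hp.le).1
      rw [hp, e', abs_le] at this
      have h5 : 0 < T * r0 := by positivity
      linarith [this.1, this.2])
  have evD := tr' (Icc r0 R ×ˢ {1}) (prod_mono le_rfl (by simp)) (isCompact_Icc.prod isCompact_singleton)
    {z | z.1 ≤ 0 ∧ 0 ≤ z.2} (IsClosed.inter (s₁ := {z : ℝ × ℝ | z.1 ≤ 0}) (s₂ := {z : ℝ × ℝ | 0 ≤ z.2})
      (isClosed_le (by fun_prop) (by fun_prop)) (isClosed_le (by fun_prop) (by fun_prop))) (by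
      rintro ⟨ρ, t⟩ ⟨hρ, ht⟩ u u' hs e e' h0 hp hz
      have ht : t = 1 := ht
      subst ht
      have hρ0 : 0 < ρ := hr0.trans_le hρ.1
      simp [cv] at e e' hz
      rcases pos0 u u' hs e (by rw [e']; exact hρ0) with h | h <;> linarith [hz.1, hz.2])
  have evE := tr' {(R, 1)} (by rintro _ rfl; exact ⟨hRR, h1⟩) isCompact_singleton
    {z | 0 ≤ z.2} (isClosed_le (by fun_prop) (by fun_prop)) (by
      rintro _ rfl u u' hs e e' h0 hp hz
      simp [cv] at e e' hz hp
      have := (hfar u u' hs h0 (Or.inr (by rw [e']; exact hR)) (by rw [hp]; exact hR0)).2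
      linarith)
  have evG := tr' ({R} ×ˢ Icc (-1:ℝ) 1) (prod_mono (by simpa using hrR) le_rfl) (isCompact_singleton.prod isCompact_Icc)
    {z | 0 ≤ z.1 ∧ z.2 = 0} (IsClosed.inter (s₁ := {z : ℝ × ℝ | 0 ≤ z.1}) (s₂ := {z : ℝ × ℝ | z.2 = 0})
      (isClosed_le (by fun_prop) (by fun_prop)) (isClosed_eq (by fun_prop) (by fun_prop))) (by
      rintro ⟨ρ, t⟩ ⟨hρ, ht⟩ u u' hs e e' h0 hp hz
      have hρ : ρ = R := hρ
      subst hρ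
      simp only [mem_ofPred_eq] at hz hp
      rcases h0.eq_or_lt with h0' | h0'
      · rcases lt_trichotomy (u' 0) 0 with hd | hd | hd
        · linarith [neg0 u u' hs h0'.symm hd, hz.1]
        · rw [← h0', hd] at hp; simp at hp; linarith
        · have := hfar u u' hs h0 (Or.inr hd) (by rw [hp]; exact hR0)
          linarith [hz.2, this.2]
      · have := hfar u u' hs h0 (Or.inl h0') (by rw [hp]; exact hR0)
        linarith [hz.1, this.1])
  have evZ : ∀ᶠ n in atTop, ∃ s ∈ Q, G n s ∈ ({0} : Set (ℝ × ℝ)) := by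
    filter_upwards [evA, evB, evC, evD, evE, evG] with n hA hB hC hD hE hGn
    obtain ⟨ρ, hρ, t, ht, z1, z2⟩ := topo (H1 := fun s => (G n s).1) (H2 := fun s => (G n s).2)
      (hG n).fst (hG n).snd hrR
      (fun ρ hρ => not_le.1 (hA (ρ, -1) ⟨hρ, rfl⟩)) (fun t ht => hB (r0, t) ⟨rfl, ht⟩)
      (not_le.1 (hC _ rfl)) (fun ρ hρ => hD (ρ, 1) ⟨hρ, rfl⟩) (not_le.1 (hE _ rfl))
      (fun t ht => hGn (R, t) ⟨rfl, ht⟩)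
    exact ⟨(ρ, t), ⟨hρ, ht⟩, Prod.ext z1 z2⟩
  obtain ⟨s, hs, u, u', hu, e, e', hz⟩ := tr Q le_rfl hQ {0} isClosed_singleton evZ.frequently
  obtain ⟨h1, h2⟩ := hcvQ s hs
  rw [← e, ← e'] at h2
  rw [← e] at h1
  have hz1 : u T - u 0 = 0 := congrArg Prod.fst hz
  have hz2 : u' T - u' 0 = 0 := congrArg Prod.snd hz
  have hs0 : 0 < s.1 := hr0.trans_le hs.1.1
  have hu0 : 0 < u 0 := by
    rcases h1.eq_or_lt with h0' | h0'
    · exfalso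
      rcases lt_trichotomy (u' 0) 0 with hd | hd | hd
      · linarith [neg0 u u' hu h0'.symm hd]
      · rw [← h0', hd] at h2; simp at h2; linarith
      · rcases pos0 u u' hu h0'.symm hd with h | h <;> linarith
    · exact h0'
  refine ⟨u, u', hu, fun x hx => ?_, by linarith, by linarith⟩
  by_contra! hc
  have hx0 : 0 < x := hx.1.lt_of_ne (fun e => by rw [← e] at hc; linarith)
  linarith [(hits_zero hg ha hu hu0.le (Or.inl hu0) hx hx0 hc).1]


lemma trunc {g0 : ℝ → ℝ} (h1 : CondG1 g0) (hreg : RegOscAtZero g0)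
    (hlim : Tendsto (fun s => g0 s / s) (nhdsWithin 0 (Ioi 0)) (nhds 0)) {κ s0 R : ℝ} (hs0 : 0 < s0)
    (hκ : ∀ s, s0 ≤ s → κ * s ≤ g0 s) (hR : s0 ≤ R) :
    ∃ (g : ℝ → ℝ) (K : ℝ), NG g K ∧ RegOscAtZero g ∧
      Tendsto (fun s => g s / s) (nhdsWithin 0 (Ioi 0)) (nhds 0) ∧
      (∀ s, s0 ≤ s → κ * s ≤ g s) ∧ ∀ s, 0 ≤ s → s ≤ R → g s = g0 s := by
  obtain ⟨hc, hn, hz, hp⟩ := h1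
  have hR0 : 0 < R := hs0.trans_le hR
  let g : ℝ → ℝ := fun s => g0 (min (max s 0) R) * max 1 (s / R)
  have agree : ∀ s, 0 ≤ s → s ≤ R → g s = g0 s := by
    intro s h h'
    have : s / R ≤ 1 := (div_le_one hR0).2 h'
    simp [g, max_eq_left h, min_eq_left h', max_eq_left this]
  have big : ∀ s, R ≤ s → g s = g0 R * (s / R) := by
    intro s h
    have : 1 ≤ s / R := (one_le_div hR0).2 h
    simp [g, max_eq_left (hR0.le.trans h), min_eq_right h, max_eq_right this]
  have hcg : Continuous g := by
    have : Continuous fun s : ℝ => g0 (min (max s 0) R) :=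
      hc.comp_continuous (by fun_prop) (fun s => le_min (le_max_right _ _) hR0.le)
    exact this.mul (by fun_prop)
  have hneg : ∀ s, s ≤ 0 → g s = 0 := by
    intro s h
    simp [g, max_eq_right h, min_eq_left hR0.le, hz]
  have hpos : ∀ s, 0 < s → 0 < g s := by
    intro s h
    exact mul_pos (hp _ (lt_min (lt_max_of_lt_left h) hR0)) (lt_max_of_lt_left one_pos)
  obtain ⟨δ, hδ, hδ'⟩ : ∃ δ > 0, ∀ s, 0 < s → s ≤ δ → g0 s ≤ s := by
    have := hlim.eventually (gt_mem_nhds (show (0:ℝ) < 1 by norm_num))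
    obtain ⟨δ, hδ, hsub⟩ := mem_nhdsGT_iff_exists_Ioc_subset.1 this
    refine ⟨δ, hδ, fun s h h' => ?_⟩
    have : g0 s / s < 1 := hsub ⟨h, h'⟩
    exact ((div_lt_one h).1 this).le
  obtain ⟨M, hM⟩ := (isCompact_Icc (a := 0) (b := R)).bddAbove_image (hc.mono Icc_subset_Ici_self)
  have hM : ∀ s, 0 ≤ s → s ≤ R → g0 s ≤ M := fun s h h' => hM ⟨s, ⟨h, h'⟩, rfl⟩
  set K := max 1 (M / δ) with hK
  have hK1 : 1 ≤ K := le_max_left _ _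
  have hK2 : M / δ ≤ K := le_max_right _ _
  have lin0 : ∀ s, 0 ≤ s → s ≤ R → g0 s ≤ K * s := by
    intro s h h'
    rcases h.eq_or_lt with e | e
    · rw [← e, hz]; simp
    rcases le_or_gt s δ with hd | hd
    · have := hδ' s e hd
      nlinarith
    · have h2 := hM s h h'
      have h3 : M ≤ K * δ := (div_le_iff₀ hδ).1 hK2
      nlinarith
  refine ⟨g, K, ⟨hcg, hneg, hpos, ?_, by linarith⟩, ?_, ?_, ?_, agree⟩
  · intro s h
    rcases le_or_gt s R with h' | h'
    · rw [agree s h h']; exact lin0 s h h'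
    · rw [big s h'.le]
      calc g0 R * (s / R) ≤ (K * R) * (s / R) := 
            mul_le_mul_of_nonneg_right (lin0 R hR0.le le_rfl) (by positivity)
        _ = K * s := by field_simp
  · intro ε hε
    obtain ⟨d, hd, η, hη, H⟩ := hreg ε hε
    refine ⟨min d (R / 2), lt_min hd (by positivity), min η (1 / 2), lt_min hη (by norm_num), ?_⟩
    intro s ω hs hs' hω
    have hs1 := hs'.trans_le (min_le_left _ _)
    have hs2 := hs'.trans_le (min_le_right _ _)
    have hω1 := hω.trans_le (min_le_left _ _)
    have hω2 := hω.trans_le (min_le_right _ _)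
    rw [abs_lt] at hω2
    rw [agree s hs.le (by linarith), agree (ω * s) (mul_nonneg (by linarith [hω2.1]) hs.le)
      (by nlinarith [hω2.2])]
    exact H s ω hs hs1 hω1
  · refine hlim.congr' ?_
    have : Ioc 0 R ∈ nhdsWithin (0:ℝ) (Ioi 0) := Ioc_mem_nhdsGT hR0
    filter_upwards [this] with s hs
    rw [agree s hs.1.le hs.2]
  · intro s h
    rcases le_or_gt s R with h' | h'
    · rw [agree s (hs0.le.trans h) h']; exact hκ s h
    · rw [big s h'.le]
      calc κ * s = (κ * R) * (s / R) := by field_simp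
        _ ≤ g0 R * (s / R) := mul_le_mul_of_nonneg_right (hκ R hR) (div_nonneg (hR0.le.trans h'.le) hR0.le)

lemma max_deriv {T : ℝ} {u u' f : ℝ → ℝ} (hs : LS f 0 T u u') {x0 : ℝ} (hx0 : x0 ∈ Icc 0 T)
    (hm : ∀ x ∈ Icc 0 T, u x ≤ u x0) (y : ℝ) (hy : y ∈ Icc 0 T) : u' x0 * (y - x0) ≤ 0 := by
  have h1 : IsLocalMaxOn u (Icc 0 T) x0 := (show IsMaxOn u (Icc 0 T) x0 from fun x hx => hm x hx).localize
  have h2 := h1.hasFDerivWithinAt_nonpos (hs.1 x0 hx0).hasFDerivWithinAt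
    (y := y - x0) (sub_mem_posTangentConeAt_of_segment_subset ((convex_Icc 0 T).segment_subset hx0 hy))
  simpa [mul_comm] using h2

lemma max_bound {T : ℝ} (hT : 0 < T) {u u' f : ℝ → ℝ} (hs : LS f 0 T u u') {m : ℕ} (hm : 0 < m)
    (σ τ : Fin m → ℝ) (hIT : ∀ i, 0 ≤ σ i ∧ σ i ≤ τ i ∧ τ i ≤ T)
    (hf : ∀ᵐ x ∂(volume.restrict (Icc (0:ℝ) T \ ⋃ i, Icc (σ i) (τ i))), f x ≤ 0)
    (hbc : (u' 0 = 0 ∧ u' T = 0) ∨ (u 0 = u T ∧ u' 0 = u' T)) {C : ℝ}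
    (hC : ∀ i, ∀ x ∈ Icc (σ i) (τ i), u x ≤ C) : ∀ x ∈ Icc 0 T, u x ≤ C := by
  have h00 : (0:ℝ) ∈ Icc 0 T := ⟨le_rfl, hT.le⟩
  have hTT : T ∈ Icc 0 T := ⟨hT.le, le_rfl⟩
  obtain ⟨x0, hx0, hmax⟩ := isCompact_Icc.exists_isMaxOn ⟨0, h00⟩ hs.cont
  have hmax : ∀ x ∈ Icc 0 T, u x ≤ u x0 := fun x hx => hmax hx
  suffices u x0 ≤ C from fun x hx => (hmax x hx).trans this
  have d0 := max_deriv hs hx0 hmax 0 h00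
  have dT := max_deriv hs hx0 hmax T hTT
  have hd : u' x0 = 0 := by
    rcases hx0.1.eq_or_lt with e | e
    · subst e
      rcases hbc with h | h
      · exact h.1
      · have := max_deriv hs hTT (fun x hx => h.1 ▸ hmax x hx) 0 h00
        rw [← h.2] at this
        nlinarith
    rcases hx0.2.eq_or_lt with e' | e'
    · subst e'
      rcases hbc with h | h
      · exact h.2
      · have := max_deriv hs h00 (fun x hx => h.1 ▸ hmax x hx) x0 hTT
        rw [h.2] at this
        nlinarith
    · nlinarith
  let A : Set ℝ := ⋃ i, Icc (σ i) (τ i)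
  have hA : IsCompact A := isCompact_iUnion fun i => isCompact_Icc
  have hAne : A.Nonempty := ⟨σ ⟨0, hm⟩, mem_iUnion.2 ⟨⟨0, hm⟩, le_rfl, (hIT _).2.1⟩⟩
  have hAT : A ⊆ Icc 0 T := iUnion_subset fun i => Icc_subset_Icc (hIT i).1 (hIT i).2.2
  obtain ⟨y, hy, hyd⟩ := hA.exists_infDist_eq_dist hAne x0
  have hyT := hAT hy
  have key : u x0 ≤ u y := by
    have hnear : ∀ z ∈ A, |x0 - y| ≤ |x0 - z| := fun z hz => by
      have := Metric.infDist_le_dist_of_mem (x := x0) hz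
      rw [hyd] at this; exact this
    rcases le_total x0 y with h | h
    · have hae : ∀ᵐ x ∂(volume.restrict (Icc x0 y)), f x ≤ 0 := by
        rw [← Measure.restrict_congr_set Ico_ae_eq_Icc]
        suffices hsub : Ico x0 y ⊆ Icc (0:ℝ) T \ ⋃ i, Icc (σ i) (τ i) from
          ae_restrict_of_ae_restrict_of_subset hsub hf
        refine fun z hz => ⟨⟨hx0.1.trans hz.1, hz.2.le.trans hyT.2⟩, fun hzA => ?_⟩
        have := hnear z hzA
        rw [abs_sub_comm, abs_of_nonneg (by linarith), abs_sub_comm, abs_of_nonneg (by linarith [hz.1])] at this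
        linarith [hz.2]
      have hmono := (hs.mono hx0.1 hyT.2).monotone hae
      have e := ftc hs.1 hs.2.1 hx0 hyT
      have : 0 ≤ ∫ t in x0..y, u' t := intervalIntegral.integral_nonneg h fun t ht => by
        rw [← hd]; exact hmono ⟨le_rfl, h⟩ ht ht.1
      linarith
    · have hae : ∀ᵐ x ∂(volume.restrict (Icc y x0)), f x ≤ 0 := by
        rw [← Measure.restrict_congr_set Ioc_ae_eq_Icc]
        suffices hsub : Ioc y x0 ⊆ Icc (0:ℝ) T \ ⋃ i, Icc (σ i) (τ i) from
          ae_restrict_of_ae_restrict_of_subset hsub hf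
        refine fun z hz => ⟨⟨hyT.1.trans hz.1.le, hz.2.trans hx0.2⟩, fun hzA => ?_⟩
        have := hnear z hzA
        rw [abs_of_nonneg (by linarith), abs_of_nonneg (by linarith [hz.2])] at this
        linarith [hz.1]
      have hmono := (hs.mono hyT.1 hx0.2).monotone hae
      have e := ftc hs.1 hs.2.1 hyT hx0
      have : 0 ≤ ∫ t in y..x0, -u' t := intervalIntegral.integral_nonneg h fun t ht => by
        have := hmono ht ⟨h, le_rfl⟩ ht.2
        linarith
      rw [intervalIntegral.integral_neg] at this
      linarith
  obtain ⟨i, hi⟩ := mem_iUnion.1 hy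
  exact key.trans (hC i y hi)

theorem statement_1
    (T : ℝ) (hT : 0 < T)
    (g : ℝ → ℝ) (hg1 : CondG1 g) (hreg : RegOscAtZero g)
    (hg0 : Tendsto (fun s => g s / s) (nhdsWithin 0 (Ioi 0)) (nhds 0))
    (a : ℝ → ℝ) (ha : IntervalIntegrable a volume 0 T)
    (m : ℕ) (hm : 0 < m) (σ τ : Fin m → ℝ)
    (hIT : ∀ i, 0 ≤ σ i ∧ σ i ≤ τ i ∧ τ i ≤ T)
    (hdisj : Pairwise fun i j => Disjoint (Icc (σ i) (τ i)) (Icc (σ j) (τ j)))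
    (hapos : ∀ i, ∀ᵐ x ∂(volume.restrict (Icc (σ i) (τ i))), 0 ≤ a x)
    (hane0 : ∀ i, ¬ (∀ᵐ x ∂(volume.restrict (Icc (σ i) (τ i))), a x = 0))
    (haneg : ∀ᵐ x ∂(volume.restrict (Icc (0:ℝ) T \ ⋃ i, Icc (σ i) (τ i))), a x ≤ 0)
    (ha2 : (∫ x in (0:ℝ)..T, a x) < 0)
    (heig : ∀ i, ∃ lam : ℝ, 0 < lam ∧ (lam : EReal) < GrowthLiminf g ∧
      DirichletEigenpair a (σ i) (τ i) lam) :
    PosSolNeumann T a g ∧ PosSolPeriodic T a g := by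
  choose lam hlam hlamG hpair using heig
  have : Nonempty (Fin m) := ⟨⟨0, hm⟩⟩
  obtain ⟨i0, hi0⟩ := Finite.exists_max lam
  obtain ⟨κ, hκ1, hκ2⟩ := EReal.lt_iff_exists_real_btwn.1 (hlamG i0)
  have hκ1 : lam i0 < κ := by exact_mod_cast hκ1
  obtain ⟨s0, hs0, hκ⟩ : ∃ s0 : ℝ, 0 < s0 ∧ ∀ s, s0 ≤ s → κ * s ≤ g s := by
    have hev := eventually_lt_of_lt_liminf hκ2
    obtain ⟨s1, hs1⟩ := eventually_atTop.1 hev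
    refine ⟨max s1 1, lt_max_of_lt_right one_pos, fun s hs => ?_⟩
    have h1 : (κ : EReal) < ((g s / s : ℝ) : EReal) := hs1 s ((le_max_left _ _).trans hs)
    have h2 : κ < g s / s := by exact_mod_cast h1
    have h3 : 0 < s := one_pos.trans_le ((le_max_right _ _).trans hs)
    exact ((lt_div_iff₀ h3).1 h2).le
  have hlt : ∀ i, σ i < τ i := by
    intro i
    rcases (hIT i).2.1.eq_or_lt with e | e
    · exfalso
      apply hane0 i
      rw [← e, Icc_self, Measure.restrict_singleton]
      simp
    · exact e
  have hσ : ∀ i, σ i ∈ Icc 0 T := fun i => ⟨(hIT i).1, (hlt i).le.trans (hIT i).2.2⟩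
  have hτ : ∀ i, τ i ∈ Icc 0 T := fun i => ⟨(hIT i).1.trans (hlt i).le, (hIT i).2.2⟩
  have hst := fun i => sturm (hlt i) (ii_sub ha (hσ i) (hτ i)) (hapos i) (hane0 i) (hlam i) (hpair i)
    ((hi0 i).trans_lt hκ1) hs0.le
  choose Ri hRi0 hRi using hst
  set R := s0 + ∑ i, Ri i with hR
  have hRle : ∀ i, Ri i ≤ R := fun i => by
    have := Finset.single_le_sum (fun j _ => hRi0 j) (Finset.mem_univ i)
    linarith
  have hs0R : s0 ≤ R := by
    have := Finset.sum_nonneg (fun j (_ : j ∈ Finset.univ) => hRi0 j)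
    linarith
  obtain ⟨G, K, hG, hGreg, hG0, hGκ, hGag⟩ := trunc hg1 hreg hg0 hs0 hκ hs0R
  have bound : ∀ i, ∀ u u' : ℝ → ℝ, LS (fun t => a t * G (u t)) 0 T u u' →
      (∀ x ∈ Icc (σ i) (τ i), 0 ≤ u x) → ∀ x ∈ Icc (σ i) (τ i), u x ≤ Ri i := by
    intro i u u' hs hu
    exact hRi i G u u' (hG.cont.comp_continuousOn (hs.cont.mono (Icc_subset_Icc (hIT i).1 (hIT i).2.2)))
      (fun s _ => hG.nonneg s) hGκ (hs.mono (hIT i).1 (hIT i).2.2) hu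
  obtain ⟨r0, hr0, hsm⟩ := small hT hG hGreg hG0 ha ha2
  obtain ⟨R0, hfar⟩ := far hG ha (hIT i0).1 (hlt i0) (hIT i0).2.2 (hRi0 i0) (bound i0)
  have fin : ∀ u u' : ℝ → ℝ, LS (fun t => a t * G (u t)) 0 T u u' → (∀ x ∈ Icc 0 T, 0 < u x) →
      ((u' 0 = 0 ∧ u' T = 0) ∨ (u 0 = u T ∧ u' 0 = u' T)) → IsSolOn T (fun t => a t * g (u t)) u u' := by
    intro u u' hs hu hbc
    have hle := max_bound hT hs hm σ τ hIT (haneg.mono fun x hx =>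
      mul_nonpos_of_nonpos_of_nonneg hx (hG.nonneg _)) hbc (C := R) (fun i x hx =>
        (bound i u u' hs (fun x hx => (hu x ⟨(hIT i).1.trans hx.1, hx.2.trans (hIT i).2.2⟩).le) x hx).trans (hRle i))
    refine (hs.congr fun t ht => ?_).isSolOn
    have ht' : t ∈ Icc 0 T := ⟨ht.1.le, ht.2⟩
    rw [hGag (u t) (hu t ht').le (hle t ht')]
  constructor
  · obtain ⟨u, u', hs, hu, h1, h2⟩ := exist_neumann hT hG ha hr0 hsm hfar
    exact ⟨u, u', fin u u' hs hu (Or.inl ⟨h1, h2⟩), hu, h1, h2⟩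
  · obtain ⟨u, u', hs, hu, h1, h2⟩ := exist_periodic hT hG ha hr0 hsm hfar
    exact ⟨u, u', fin u u' hs hu (Or.inr ⟨h1, h2⟩), hu, h1, h2⟩
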